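/- Let 0 < q < 1 and d > 0. Assume Ω admits a normalized first Dirichlet eigenpair (λ₁, φ₁) and a torsion function ξ. Then there exists a positive number μ₀ such that for every μ ∈ (0, μ₀) the problem −(1 + d‖∇u‖_2²) Δu = μ u^q + π sin³(u) in Ω, u > 0 in Ω, u = 0 on ∂Ω has at least one classical solution u, which moreover satisfies 0 < u(x) ≤ π/2 for all x ∈ Ω. -/

import Mathlib

open MeasureTheory Set Real
open scoped ENNReal NNReal

noncomputable section

/-- The Laplacian of `u : ℝ^N → ℝ`, as the sum of second partial derivatives. -/
def lapl {N : ℕ} (u : EuclideanSpace ℝ (Fin N) → ℝ) (x : EuclideanSpace ℝ (Fin N)) : ℝ :=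
  ∑ i : Fin N, fderiv ℝ (fun y => fderiv ℝ u y (EuclideanSpace.single i 1)) x
    (EuclideanSpace.single i 1)

/-- The `L^p` norm of `u` on `Ω`. -/
def LpNorm {N : ℕ} (Ω : Set (EuclideanSpace ℝ (Fin N))) (p : ℝ≥0∞)
    (u : EuclideanSpace ℝ (Fin N) → ℝ) : ℝ :=
  (eLpNorm u p (volume.restrict Ω)).toReal

/-- The `L²` norm of the gradient of `u` on `Ω`. -/
def gradNorm2 {N : ℕ} (Ω : Set (EuclideanSpace ℝ (Fin N)))
    (u : EuclideanSpace ℝ (Fin N) → ℝ) : ℝ :=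
  (eLpNorm (fun x => gradient u x) 2 (volume.restrict Ω)).toReal

/-- A torsion function of `Ω`: `ξ ∈ C(Ω̄) ∩ C²(Ω)`, `ξ ≥ 0` in `Ω`, `-Δξ = 1` in `Ω`,
`ξ = 0` on `∂Ω`. -/
def IsTorsionFn {N : ℕ} (Ω : Set (EuclideanSpace ℝ (Fin N)))
    (ξ : EuclideanSpace ℝ (Fin N) → ℝ) : Prop :=
  ContinuousOn ξ (closure Ω) ∧ ContDiffOn ℝ 2 ξ Ω ∧ (∀ x ∈ Ω, 0 ≤ ξ x) ∧
    (∀ x ∈ Ω, -lapl ξ x = 1) ∧ (∀ x ∈ frontier Ω, ξ x = 0)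

/-- A normalized first Dirichlet eigenpair of `Ω`: `λ₁ > 0`, `φ₁ ∈ C(Ω̄) ∩ C²(Ω)`, `φ₁ > 0`
in `Ω`, `-Δφ₁ = λ₁ φ₁` in `Ω`, `φ₁ = 0` on `∂Ω`, and `max_{Ω̄} φ₁ = 1`. -/
def IsFirstEigenpair {N : ℕ} (Ω : Set (EuclideanSpace ℝ (Fin N)))
    (l : ℝ) (φ₁ : EuclideanSpace ℝ (Fin N) → ℝ) : Prop :=
  0 < l ∧ ContinuousOn φ₁ (closure Ω) ∧ ContDiffOn ℝ 2 φ₁ Ω ∧ (∀ x ∈ Ω, 0 < φ₁ x) ∧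
    (∀ x ∈ Ω, -lapl φ₁ x = l * φ₁ x) ∧ (∀ x ∈ frontier Ω, φ₁ x = 0) ∧
    IsGreatest (φ₁ '' closure Ω) 1

/-!
For `-Δu = f` with bounded `f`, the equation is encoded by a smoothed mean value formula: `u` minus
its average at scale `T` equals an integral over the scales `t ≤ T` of averages of `f`. This makes
sense for merely bounded measurable functions and is stable under bounded pointwise limits. The
Dirichlet problem is solved as the limit of a discrete scheme which replaces `u` by its average at
scale `h` plus a multiple of `h² f`: the torsion function bounds the discrete solutions and controls
them near the boundary, and comparing a solution with its own translates makes them equicontinuous.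

For a frozen coefficient `t`, monotone iteration from `ε φ₁`, below the supersolution `t F(a) ξ`,
yields the minimal solution `u_t` of `-Δu = t F(u)`, where `F(u) = μ u ^ q + π sin³ u`. A bound
`F r ≤ (r / s) ^ p * F s` with `p < 1` gives `u_t ≤ (t / s) ^ (1 / (1 - p)) * u_s` for `s ≤ t`, so
that `t ↦ ∫ F(u_t) u_t` is continuous. By the intermediate value theorem
`t (1 + d t ∫ F(u_t) u_t) = 1` for some `t`, and the energy identity `‖∇u‖² = t ∫ F(u) u` turns
`-Δu = t F(u)` into the Kirchhoff equation.
-/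

section RadialKernels

open Filter Topology Metric
open scoped ContDiff

variable {E : Type*} [NormedAddCommGroup E] [InnerProductSpace ℝ E]

/-- A smooth weight on `E` supported in the closed unit ball. -/
structure IsUnitBallKernel (κ : E → ℝ) : Prop where
  contDiff : ContDiff ℝ ∞ κ
  tsupport_subset : tsupport κ ⊆ closedBall 0 1

namespace IsUnitBallKernel

variable {κ : E → ℝ}

lemma continuous (hκ : IsUnitBallKernel κ) : Continuous κ := hκ.contDiff.continuous

lemma differentiable (hκ : IsUnitBallKernel κ) : Differentiable ℝ κ :=
  hκ.contDiff.differentiable (by simp)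

lemma eq_zero_of_one_lt_norm (hκ : IsUnitBallKernel κ) {z : E} (hz : 1 < ‖z‖) : κ z = 0 :=
  image_eq_zero_of_notMem_tsupport fun h ↦
    hz.not_ge (mem_closedBall_zero_iff.1 (hκ.tsupport_subset h))

lemma const_mul (hκ : IsUnitBallKernel κ) (c : ℝ) : IsUnitBallKernel fun z ↦ c * κ z :=
  ⟨contDiff_const.mul hκ.contDiff,
    (tsupport_mul_subset_right (f := fun _ ↦ c) (g := κ)).trans hκ.tsupport_subset⟩

lemma fderiv_apply (hκ : IsUnitBallKernel κ) (v : E) :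
    IsUnitBallKernel fun z ↦ fderiv ℝ κ z v :=
  ⟨(hκ.contDiff.fderiv_right (by simp)).clm_apply contDiff_const,
    (tsupport_fderiv_apply_subset ℝ v).trans hκ.tsupport_subset⟩

lemma hasCompactSupport [FiniteDimensional ℝ E] (hκ : IsUnitBallKernel κ) :
    HasCompactSupport κ :=
  (isCompact_closedBall 0 1).of_isClosed_subset (isClosed_tsupport κ) hκ.tsupport_subset

variable [FiniteDimensional ℝ E] [MeasurableSpace E] [BorelSpace E]

lemma integrable (hκ : IsUnitBallKernel κ) : Integrable κ :=
  hκ.continuous.integrable_of_hasCompactSupport hκ.hasCompactSupport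

end IsUnitBallKernel

lemma isUnitBallKernel_comp_norm_sq {g : ℝ → ℝ} (hg : ContDiff ℝ ∞ g)
    (hg_zero : ∀ s, 1 < s → g s = 0) : IsUnitBallKernel fun z : E ↦ g (‖z‖ ^ 2) where
  contDiff := hg.comp (contDiff_norm_sq ℝ)
  tsupport_subset := by
    refine closure_minimal (fun z hz ↦ ?_) isClosed_closedBall
    by_contra h
    rw [mem_closedBall_zero_iff, not_le] at h
    exact hz (hg_zero _ (one_lt_pow₀ h two_ne_zero))

lemma hasFDerivAt_comp_norm_sq {g : ℝ → ℝ} (hg : Differentiable ℝ g) (z : E) :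
    HasFDerivAt (fun z : E ↦ g (‖z‖ ^ 2)) ((2 * deriv g (‖z‖ ^ 2)) • innerSL ℝ z) z := by
  refine ((hg (‖z‖ ^ 2)).hasDerivAt.comp_hasFDerivAt z
    (hasStrictFDerivAt_norm_sq z).hasFDerivAt).congr_fderiv ?_
  ext v
  simp only [smul_apply, nsmul_eq_mul, smul_eq_mul, Nat.cast_ofNat]
  ring

/-- A smooth cutoff profile: decreasing from `1` at `0` to `0` on `[1, ∞)`. -/
def cutoffProfile (s : ℝ) : ℝ := smoothTransition (1 - s)

lemma contDiff_cutoffProfile : ContDiff ℝ ∞ cutoffProfile :=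
  smoothTransition.contDiff.comp (contDiff_const.sub contDiff_id)

lemma cutoffProfile_eq_zero {s : ℝ} (hs : 1 ≤ s) : cutoffProfile s = 0 :=
  smoothTransition.zero_of_nonpos (by linarith)

lemma antitone_cutoffProfile : Antitone cutoffProfile :=
  fun _ _ h ↦ smoothTransition.monotone (by linarith)

lemma deriv_cutoffProfile_eq_zero {s : ℝ} (hs : 1 < s) : deriv cutoffProfile s = 0 := by
  have h : cutoffProfile =ᶠ[𝓝 s] fun _ ↦ 0 := by
    filter_upwards [Ioi_mem_nhds hs] with r hr using cutoffProfile_eq_zero (le_of_lt hr)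
  rw [h.deriv_eq, deriv_const]

lemma exists_deriv_cutoffProfile_eq_neg_one : ∃ s, 0 ≤ s ∧ deriv cutoffProfile s = -1 := by
  obtain ⟨s, hs, hs'⟩ := exists_deriv_eq_slope cutoffProfile zero_lt_one
    contDiff_cutoffProfile.continuous.continuousOn
    (contDiff_cutoffProfile.differentiable (by simp)).differentiableOn
  exact ⟨s, hs.1.le, by simpa [cutoffProfile] using hs'⟩

variable (E) in
/-- A pair of nonnegative radial weights `σ`, `ρ` with `∇σ(z) = -ρ(z) z` and `∫ ρ = 1`.
Averaging with the weight `ρ` at scale `t` has derivative `t` times averaging the Laplacian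
with the weight `σ`, which gives a smoothed version of the mean value formula. -/
structure LaplaceKernel [FiniteDimensional ℝ E] [MeasurableSpace E] [BorelSpace E] where
  σ : E → ℝ
  ρ : E → ℝ
  isUnitBallKernel_σ : IsUnitBallKernel σ
  isUnitBallKernel_ρ : IsUnitBallKernel ρ
  σ_nonneg : ∀ z, 0 ≤ σ z
  ρ_nonneg : ∀ z, 0 ≤ ρ z
  integral_ρ : ∫ z, ρ z = 1
  integral_σ_pos : 0 < ∫ z, σ z
  hasFDerivAt_σ : ∀ z, HasFDerivAt σ (-(ρ z) • innerSL ℝ z) z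

variable [FiniteDimensional ℝ E] [MeasurableSpace E] [BorelSpace E]

lemma integral_deriv_cutoffProfile_norm_sq_pos [Nontrivial E] :
    0 < ∫ z : E, -2 * deriv cutoffProfile (‖z‖ ^ 2) := by
  have hκ : IsUnitBallKernel fun z : E ↦ -2 * deriv cutoffProfile (‖z‖ ^ 2) :=
    (isUnitBallKernel_comp_norm_sq (contDiff_infty_iff_deriv.1 contDiff_cutoffProfile).2
      fun _ ↦ deriv_cutoffProfile_eq_zero).const_mul _
  obtain ⟨s, hs, hs'⟩ := exists_deriv_cutoffProfile_eq_neg_one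
  obtain ⟨z, hz⟩ := exists_norm_eq E (sqrt_nonneg s)
  refine hκ.continuous.integral_pos_of_hasCompactSupport_nonneg_nonzero hκ.hasCompactSupport
    (fun z ↦ ?_) (x := z) ?_
  · exact mul_nonneg_of_nonpos_of_nonpos (by norm_num) antitone_cutoffProfile.deriv_nonpos
  · simp [hz, sq_sqrt hs, hs']

instance [Nontrivial E] : Nonempty (LaplaceKernel E) := by
  set c := ∫ z : E, -2 * deriv cutoffProfile (‖z‖ ^ 2) with hc
  have hc_pos : 0 < c := integral_deriv_cutoffProfile_norm_sq_pos
  have hσ : IsUnitBallKernel fun z : E ↦ cutoffProfile (‖z‖ ^ 2) :=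
    isUnitBallKernel_comp_norm_sq contDiff_cutoffProfile fun _ hs ↦ cutoffProfile_eq_zero hs.le
  have hρ : IsUnitBallKernel fun z : E ↦ deriv cutoffProfile (‖z‖ ^ 2) :=
    isUnitBallKernel_comp_norm_sq (contDiff_infty_iff_deriv.1 contDiff_cutoffProfile).2
      fun _ ↦ deriv_cutoffProfile_eq_zero
  have hσ_pos : 0 < ∫ z : E, cutoffProfile (‖z‖ ^ 2) :=
    hσ.continuous.integral_pos_of_hasCompactSupport_nonneg_nonzero hσ.hasCompactSupport
      (fun _ ↦ smoothTransition.nonneg _) (x := 0) (by simp [cutoffProfile])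
  exact ⟨{
    σ := fun z ↦ c⁻¹ * cutoffProfile (‖z‖ ^ 2)
    ρ := fun z ↦ c⁻¹ * (-2 * deriv cutoffProfile (‖z‖ ^ 2))
    isUnitBallKernel_σ := hσ.const_mul _
    isUnitBallKernel_ρ := (hρ.const_mul _).const_mul _
    σ_nonneg := fun _ ↦ mul_nonneg (inv_nonneg.2 hc_pos.le) (smoothTransition.nonneg _)
    ρ_nonneg := fun _ ↦ mul_nonneg (inv_nonneg.2 hc_pos.le)
      (mul_nonneg_of_nonpos_of_nonpos (by norm_num) antitone_cutoffProfile.deriv_nonpos)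
    integral_ρ := by rw [integral_const_mul, ← hc, inv_mul_cancel₀ hc_pos.ne']
    integral_σ_pos := by rw [integral_const_mul]; exact mul_pos (inv_pos.2 hc_pos) hσ_pos
    hasFDerivAt_σ := fun z ↦ by
      refine ((hasFDerivAt_comp_norm_sq (contDiff_cutoffProfile.differentiable (by simp))
        z).const_mul c⁻¹).congr_fderiv ?_
      rw [smul_smul]
      ring_nf }⟩

end RadialKernels

/-- Measurable functions with a uniform bound, a class on which weighted averages are defined at
every point and every scale. -/
structure IsBddMeasurable {α : Type*} [MeasurableSpace α] (f : α → ℝ) : Prop where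
  measurable : Measurable f
  bounded : ∃ M, ∀ x, |f x| ≤ M

namespace IsBddMeasurable

variable {α β : Type*} [MeasurableSpace α] [MeasurableSpace β] {f g : α → ℝ}

lemma const (c : ℝ) : IsBddMeasurable fun _ : α ↦ c :=
  ⟨measurable_const, |c|, fun _ ↦ le_rfl⟩

lemma comp (hf : IsBddMeasurable f) {φ : β → α} (hφ : Measurable φ) :
    IsBddMeasurable fun y ↦ f (φ y) :=
  ⟨hf.measurable.comp hφ, hf.bounded.imp fun _ hM _ ↦ hM _⟩

lemma add (hf : IsBddMeasurable f) (hg : IsBddMeasurable g) :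
    IsBddMeasurable fun x ↦ f x + g x := by
  obtain ⟨M, hM⟩ := hf.bounded
  obtain ⟨M', hM'⟩ := hg.bounded
  exact ⟨hf.measurable.add hg.measurable, M + M',
    fun x ↦ (abs_add_le _ _).trans (add_le_add (hM x) (hM' x))⟩

lemma const_mul (hf : IsBddMeasurable f) (c : ℝ) : IsBddMeasurable fun x ↦ c * f x := by
  obtain ⟨M, hM⟩ := hf.bounded
  exact ⟨hf.measurable.const_mul c, |c| * M,
    fun x ↦ (abs_mul _ _).trans_le (mul_le_mul_of_nonneg_left (hM x) (abs_nonneg c))⟩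

lemma sub (hf : IsBddMeasurable f) (hg : IsBddMeasurable g) :
    IsBddMeasurable fun x ↦ f x - g x := by
  simpa only [neg_one_mul, ← sub_eq_add_neg] using hf.add (hg.const_mul (-1))

end IsBddMeasurable

lemma IsBddMeasurable.of_hasCompactSupport {X : Type*} [TopologicalSpace X]
    [MeasurableSpace X] [OpensMeasurableSpace X] {f : X → ℝ} (hf : Continuous f)
    (hf' : HasCompactSupport f) : IsBddMeasurable f :=
  ⟨hf.measurable, hf.bounded_above_of_compact_support hf'⟩

section ScaledAverages

open Filter Topology Metric
open scoped ContDiff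

variable {E : Type*} [NormedAddCommGroup E] [InnerProductSpace ℝ E] {κ f g : E → ℝ} {t : ℝ}
  {x : E}

lemma IsUnitBallKernel.eq_zero_or_mem_closedBall (hκ : IsUnitBallKernel κ) (ht : 0 ≤ t)
    (x z : E) : κ z = 0 ∨ x + t • z ∈ closedBall x t := by
  refine or_iff_not_imp_left.2 fun hz ↦ ?_
  have hz' : ‖z‖ ≤ 1 := not_lt.1 fun h ↦ hz (hκ.eq_zero_of_one_lt_norm h)
  rw [mem_closedBall, dist_self_add_left, norm_smul, norm_of_nonneg ht]
  exact mul_le_of_le_one_right ht hz'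

/-- The reflected and rescaled weight for which averaging at scale `t` is a convolution. -/
def rescaledKernel (κ : E → ℝ) (t : ℝ) (y : E) : ℝ :=
  |(t ^ Module.finrank ℝ E)⁻¹| * κ (-(t⁻¹ • y))

lemma contDiff_rescaledKernel (hκ : IsUnitBallKernel κ) (t : ℝ) :
    ContDiff ℝ ∞ (rescaledKernel κ t) :=
  contDiff_const.mul (hκ.contDiff.comp (by fun_prop))

lemma fderiv_rescaledKernel (hκ : IsUnitBallKernel κ) (t : ℝ) (y v : E) :
    fderiv ℝ (rescaledKernel κ t) y v =
      -t⁻¹ * rescaledKernel (fun z ↦ fderiv ℝ κ z v) t y := by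
  have h : HasFDerivAt (fun y : E ↦ -(t⁻¹ • y)) (-(t⁻¹ • ContinuousLinearMap.id ℝ E)) y :=
    ((hasFDerivAt_id y).const_smul t⁻¹).neg
  have h' : fderiv ℝ (rescaledKernel κ t) y = _ :=
    (((hκ.differentiable _).hasFDerivAt.comp y h).const_mul _).fderiv
  rw [h']
  simp only [smul_apply, ContinuousLinearMap.comp_apply, neg_apply, map_neg, map_smul,
    ContinuousLinearMap.id_apply, smul_eq_mul, rescaledKernel]
  ring

variable [FiniteDimensional ℝ E]

lemma hasCompactSupport_rescaledKernel (hκ : IsUnitBallKernel κ) (ht : t ≠ 0) :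
    HasCompactSupport (rescaledKernel κ t) := by
  have h : HasCompactSupport fun y ↦ κ (-t⁻¹ • y) :=
    hκ.hasCompactSupport.comp_smul (neg_ne_zero.2 (inv_ne_zero ht))
  simp only [neg_smul] at h
  exact h.mul_left

variable [MeasurableSpace E] [BorelSpace E]

lemma IsBddMeasurable.locallyIntegrable (hf : IsBddMeasurable f) : LocallyIntegrable f := by
  obtain ⟨M, hM⟩ := hf.bounded
  exact (locallyIntegrable_const M).mono hf.measurable.aestronglyMeasurable
    (Eventually.of_forall fun x ↦ (hM x).trans (le_abs_self M))

/-- The average of `f` around `x` at scale `t` with weight `κ`. -/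
def scaledAverage (κ : E → ℝ) (t : ℝ) (f : E → ℝ) (x : E) : ℝ := ∫ z, κ z * f (x + t • z)

lemma integrable_scaledAverage (hκ : IsUnitBallKernel κ) (hf : IsBddMeasurable f) (t : ℝ)
    (x : E) : Integrable fun z ↦ κ z * f (x + t • z) := by
  have h : IsBddMeasurable fun z ↦ f (x + t • z) := hf.comp (by fun_prop)
  obtain ⟨M, hM⟩ := h.bounded
  exact hκ.integrable.mul_bdd h.measurable.aestronglyMeasurable (Eventually.of_forall hM)

lemma abs_scaledAverage_le (hκ : IsUnitBallKernel κ) (hf : Measurable f) {M : ℝ}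
    (hM : ∀ x, |f x| ≤ M) (t : ℝ) (x : E) : |scaledAverage κ t f x| ≤ (∫ z, |κ z|) * M := by
  rw [scaledAverage, ← integral_mul_const]
  refine abs_integral_le_integral_abs.trans (integral_mono
    (integrable_scaledAverage hκ ⟨hf, M, hM⟩ t x).abs (hκ.integrable.abs.mul_const M) fun z ↦ ?_)
  simp only [abs_mul]
  exact mul_le_mul_of_nonneg_left (hM _) (abs_nonneg _)

lemma scaledAverage_add (hκ : IsUnitBallKernel κ) (hf : IsBddMeasurable f)
    (hg : IsBddMeasurable g) (t : ℝ) (x : E) :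
    scaledAverage κ t (fun y ↦ f y + g y) x = scaledAverage κ t f x + scaledAverage κ t g x := by
  simp only [scaledAverage, mul_add]
  exact integral_add (integrable_scaledAverage hκ hf t x) (integrable_scaledAverage hκ hg t x)

lemma scaledAverage_sub (hκ : IsUnitBallKernel κ) (hf : IsBddMeasurable f)
    (hg : IsBddMeasurable g) (t : ℝ) (x : E) :
    scaledAverage κ t (fun y ↦ f y - g y) x = scaledAverage κ t f x - scaledAverage κ t g x := by
  simp only [scaledAverage, mul_sub]
  exact integral_sub (integrable_scaledAverage hκ hf t x) (integrable_scaledAverage hκ hg t x)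

lemma scaledAverage_const_mul (κ f : E → ℝ) (c t : ℝ) (x : E) :
    scaledAverage κ t (fun y ↦ c * f y) x = c * scaledAverage κ t f x := by
  simp only [scaledAverage, mul_left_comm _ c, integral_const_mul]

lemma scaledAverage_const (κ : E → ℝ) (c t : ℝ) (x : E) :
    scaledAverage κ t (fun _ ↦ c) x = (∫ z, κ z) * c := by
  rw [scaledAverage, integral_mul_const]

lemma scaledAverage_zero_scale (κ f : E → ℝ) (x : E) :
    scaledAverage κ 0 f x = (∫ z, κ z) * f x := by
  simp only [scaledAverage, zero_smul, add_zero, integral_mul_const]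

lemma scaledAverage_congr (hκ : IsUnitBallKernel κ) (ht : 0 ≤ t)
    (h : ∀ y ∈ closedBall x t, f y = g y) : scaledAverage κ t f x = scaledAverage κ t g x := by
  refine integral_congr_ae (Eventually.of_forall fun z ↦ ?_)
  rcases hκ.eq_zero_or_mem_closedBall ht x z with hz | hz
  · simp only [hz, zero_mul]
  · simp only [h _ hz]

lemma scaledAverage_mono (hκ : IsUnitBallKernel κ) (hκ_nonneg : ∀ z, 0 ≤ κ z)
    (hf : IsBddMeasurable f) (hg : IsBddMeasurable g) (ht : 0 ≤ t)
    (h : ∀ y ∈ closedBall x t, f y ≤ g y) : scaledAverage κ t f x ≤ scaledAverage κ t g x := by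
  refine integral_mono (integrable_scaledAverage hκ hf t x) (integrable_scaledAverage hκ hg t x)
    fun z ↦ ?_
  rcases hκ.eq_zero_or_mem_closedBall ht x z with hz | hz
  · simp only [hz, zero_mul, le_refl]
  · exact mul_le_mul_of_nonneg_left (h _ hz) (hκ_nonneg z)

lemma stronglyMeasurable_scaledAverage (hκ : IsUnitBallKernel κ) (hf : Measurable f) :
    StronglyMeasurable fun p : ℝ × E ↦ scaledAverage κ p.1 f p.2 := by
  have h : Measurable fun q : (ℝ × E) × E ↦ κ q.2 * f (q.1.2 + q.1.1 • q.2) :=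
    (hκ.continuous.measurable.comp measurable_snd).mul (hf.comp (by fun_prop))
  exact h.stronglyMeasurable.integral_prod_right

lemma scaledAverage_eq_convolution (κ f : E → ℝ) (ht : t ≠ 0) :
    scaledAverage κ t f =
      convolution f (rescaledKernel κ t) (ContinuousLinearMap.mul ℝ ℝ) volume := by
  ext x
  have h := Measure.integral_comp_smul (volume : Measure E) (fun w ↦ κ (t⁻¹ • w) * f (x + w)) t
  simp only [smul_smul, inv_mul_cancel₀ ht, one_smul] at h
  rw [scaledAverage, h, smul_eq_mul, ← integral_const_mul, ← integral_sub_right_eq_self _ x]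
  refine integral_congr_ae (Eventually.of_forall fun y ↦ ?_)
  simp only [ContinuousLinearMap.mul_apply', rescaledKernel, ← smul_neg, neg_sub,
    add_sub_cancel]
  ring

lemma contDiff_scaledAverage (hκ : IsUnitBallKernel κ) (hf : IsBddMeasurable f) (ht : t ≠ 0) :
    ContDiff ℝ ∞ (scaledAverage κ t f) := by
  rw [scaledAverage_eq_convolution κ f ht]
  exact (hasCompactSupport_rescaledKernel hκ ht).contDiff_convolution_right _
    hf.locallyIntegrable (contDiff_rescaledKernel hκ t)

lemma fderiv_scaledAverage (hκ : IsUnitBallKernel κ) (hf : IsBddMeasurable f) (ht : t ≠ 0)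
    (x v : E) : fderiv ℝ (scaledAverage κ t f) x v =
      -t⁻¹ * scaledAverage (fun z ↦ fderiv ℝ κ z v) t f x := by
  have hsupp := hasCompactSupport_rescaledKernel hκ ht
  have hsmooth : ContDiff ℝ 1 (rescaledKernel κ t) := (contDiff_rescaledKernel hκ t).of_le (by simp)
  rw [scaledAverage_eq_convolution κ f ht, (hsupp.hasFDerivAt_convolution_right
      (ContinuousLinearMap.mul ℝ ℝ) hf.locallyIntegrable hsmooth x).fderiv,
    convolution_precompR_apply _ hf.locallyIntegrable (hsupp.fderiv ℝ)
      (hsmooth.continuous_fderiv one_ne_zero),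
    ← scaledAverage_const_mul, scaledAverage_eq_convolution _ _ ht]
  simp only [convolution, ContinuousLinearMap.mul_apply', fderiv_rescaledKernel hκ]
  exact integral_congr_ae (Eventually.of_forall fun y ↦ by ring)

lemma scaledAverage_fderiv_kernel (hκ : IsUnitBallKernel κ) (hg : ContDiff ℝ 1 g)
    (t : ℝ) (x v : E) :
    scaledAverage (fun z ↦ fderiv ℝ κ z v) t g x =
      -t * scaledAverage κ t (fun y ↦ fderiv ℝ g y v) x := by
  have hg_diff : Differentiable ℝ g := hg.differentiable one_ne_zero
  have hg_fderiv : Continuous fun y ↦ fderiv ℝ g y v :=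
    (hg.continuous_fderiv one_ne_zero).clm_apply continuous_const
  have hg_comp : Continuous fun z ↦ g (x + t • z) := hg.continuous.comp (by fun_prop)
  have hchain (z : E) : fderiv ℝ (fun z ↦ g (x + t • z)) z v = t * fderiv ℝ g (x + t • z) v := by
    have h : HasFDerivAt (fun z : E ↦ x + t • z) (t • ContinuousLinearMap.id ℝ E) z :=
      ((hasFDerivAt_id z).const_smul t).const_add x
    have h' : HasFDerivAt (fun z ↦ g (x + t • z)) _ z :=
      (hg_diff (x + t • z)).hasFDerivAt.comp z h
    rw [h'.fderiv]
    simp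
  have hparts := integral_mul_fderiv_eq_neg_fderiv_mul_of_integrable (μ := volume) (f := κ)
    (g := fun z ↦ g (x + t • z)) (v := v)
    (((hκ.fderiv_apply v).continuous.mul hg_comp).integrable_of_hasCompactSupport
      (hκ.fderiv_apply v).hasCompactSupport.mul_right)
    (by
      simp only [hchain]
      exact (hκ.continuous.mul (continuous_const.mul (hg_fderiv.comp
        (by fun_prop)))).integrable_of_hasCompactSupport hκ.hasCompactSupport.mul_right)
    ((hκ.continuous.mul hg_comp).integrable_of_hasCompactSupport hκ.hasCompactSupport.mul_right)
    (fun z _ ↦ hκ.differentiable z) (fun z _ ↦ (hg_diff _).comp z (by fun_prop))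
  simp only [hchain, mul_left_comm _ t, integral_const_mul] at hparts
  rw [scaledAverage, scaledAverage, neg_mul, hparts, neg_neg]

end ScaledAverages

namespace LaplaceKernel

open Filter Topology Metric
open scoped ContDiff

variable {E : Type*} [NormedAddCommGroup E] [InnerProductSpace ℝ E] [FiniteDimensional ℝ E]
  [MeasurableSpace E] [BorelSpace E] (k : LaplaceKernel E) {f g : E → ℝ} {t T : ℝ} {x : E}

/-- The local potential of `f`: the defect `u x - scaledAverage k.ρ T u x` of the smoothed mean
value formula for a solution of `-Δu = f`. -/
def potential (T : ℝ) (f : E → ℝ) (x : E) : ℝ := ∫ t in (0 : ℝ)..T, t * scaledAverage k.σ t f x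

/-- The derivative at `x` of the integrand `t * scaledAverage k.σ t f x` of the potential, in a form
that does not differentiate `f` and is bounded uniformly in `t`. -/
def potentialGradDensity (t : ℝ) (f : E → ℝ) (x : E) : E →L[ℝ] ℝ :=
  ∫ z, (k.ρ z * f (x + t • z)) • innerSL ℝ z

lemma intervalIntegrable_potential (hf : IsBddMeasurable f) (T : ℝ) (x : E) :
    IntervalIntegrable (fun t ↦ t * scaledAverage k.σ t f x) volume 0 T := by
  obtain ⟨M, hM⟩ := hf.bounded
  have hmeas : StronglyMeasurable fun t : ℝ ↦ scaledAverage k.σ t f x :=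
    (stronglyMeasurable_scaledAverage k.isUnitBallKernel_σ hf.measurable).comp_measurable
      (g := fun t : ℝ ↦ (t, x)) (by fun_prop)
  have h : IntervalIntegrable (fun t ↦ scaledAverage k.σ t f x) volume 0 T :=
    (intervalIntegrable_const (c := (∫ z, |k.σ z|) * M)).mono_fun hmeas.aestronglyMeasurable
      (Eventually.of_forall fun t ↦ (abs_scaledAverage_le k.isUnitBallKernel_σ hf.measurable
        hM t x).trans (le_abs_self _))
  exact h.continuousOn_mul continuousOn_id

lemma integrable_potentialGradDensity (hf : IsBddMeasurable f) (t : ℝ) (x : E) :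
    Integrable fun z ↦ (k.ρ z * f (x + t • z)) • innerSL ℝ z := by
  have hρ : Integrable fun z ↦ k.ρ z • innerSL ℝ z :=
    Continuous.integrable_of_hasCompactSupport
      (k.isUnitBallKernel_ρ.continuous.smul (innerSL ℝ).continuous)
      k.isUnitBallKernel_ρ.hasCompactSupport.smul_right
  have hf' : IsBddMeasurable fun z ↦ f (x + t • z) := hf.comp (by fun_prop)
  obtain ⟨M, hM⟩ := hf'.bounded
  refine (hρ.bdd_smul M hf'.measurable.aestronglyMeasurable (Eventually.of_forall hM)).congr
    (Eventually.of_forall fun z ↦ ?_)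
  simp only [Pi.smul_apply', smul_smul, mul_comm]

lemma potentialGradDensity_apply (hf : IsBddMeasurable f) (t : ℝ) (x v : E) :
    k.potentialGradDensity t f x v = -scaledAverage (fun z ↦ fderiv ℝ k.σ z v) t f x := by
  rw [potentialGradDensity, ContinuousLinearMap.integral_apply
    (k.integrable_potentialGradDensity hf t x), scaledAverage, ← integral_neg]
  refine integral_congr_ae (Eventually.of_forall fun z ↦ ?_)
  simp only [(k.hasFDerivAt_σ z).fderiv, smul_apply, innerSL_apply_apply, smul_eq_mul]
  ring

lemma norm_potentialGradDensity_le {M : ℝ} (hM : ∀ x, |f x| ≤ M) (t : ℝ) (x : E) :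
    ‖k.potentialGradDensity t f x‖ ≤ M := by
  have hM_eq : ∫ z, k.ρ z * M = M := by rw [integral_mul_const, k.integral_ρ, one_mul]
  rw [← hM_eq]
  refine norm_integral_le_of_norm_le (k.isUnitBallKernel_ρ.integrable.mul_const M)
    (Eventually.of_forall fun z ↦ ?_)
  rw [norm_smul, innerSL_apply_norm, norm_mul, norm_of_nonneg (k.ρ_nonneg z), mul_assoc]
  rcases lt_or_ge 1 ‖z‖ with hz | hz
  · simp only [k.isUnitBallKernel_ρ.eq_zero_of_one_lt_norm hz, zero_mul, le_refl]
  · exact mul_le_mul_of_nonneg_left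
      ((mul_le_of_le_one_right (norm_nonneg _) hz).trans (hM _)) (k.ρ_nonneg z)

lemma hasFDerivAt_mul_scaledAverage (hf : IsBddMeasurable f) (ht : t ≠ 0) (x : E) :
    HasFDerivAt (fun x ↦ t * scaledAverage k.σ t f x) (k.potentialGradDensity t f x) x := by
  have hdiff : DifferentiableAt ℝ (scaledAverage k.σ t f) x :=
    (contDiff_scaledAverage k.isUnitBallKernel_σ hf ht).differentiable (by simp) x
  refine (hdiff.hasFDerivAt.const_mul t).congr_fderiv ?_
  ext v
  rw [k.potentialGradDensity_apply hf, smul_apply, smul_eq_mul,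
    fderiv_scaledAverage k.isUnitBallKernel_σ hf ht]
  field_simp

lemma continuous_potentialGradDensity (hf : IsBddMeasurable f) (ht : t ≠ 0) :
    Continuous (k.potentialGradDensity t f) := by
  have h : fderiv ℝ (fun x ↦ t * scaledAverage k.σ t f x) = k.potentialGradDensity t f :=
    funext fun x ↦ (k.hasFDerivAt_mul_scaledAverage hf ht x).fderiv
  rw [← h]
  exact (contDiff_const.mul (contDiff_scaledAverage k.isUnitBallKernel_σ hf
    ht)).continuous_fderiv (by simp)

lemma intervalIntegrable_potentialGradDensity (hf : IsBddMeasurable f) (T : ℝ) (x : E) :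
    IntervalIntegrable (fun t ↦ k.potentialGradDensity t f x) volume 0 T := by
  obtain ⟨M, hM⟩ := hf.bounded
  have hweight : Measurable fun q : ℝ × E ↦ k.ρ q.2 * f (x + q.1 • q.2) :=
    (k.isUnitBallKernel_ρ.continuous.measurable.comp measurable_snd).mul
      (hf.measurable.comp (by fun_prop))
  have hinner : StronglyMeasurable fun q : ℝ × E ↦ innerSL ℝ q.2 :=
    Continuous.stronglyMeasurable (by fun_prop)
  exact (intervalIntegrable_const (c := M)).mono_fun
    (hweight.stronglyMeasurable.smul hinner).integral_prod_right.aestronglyMeasurable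
    (Eventually.of_forall fun t ↦
      (k.norm_potentialGradDensity_le hM t x).trans (le_abs_self _))

lemma hasFDerivAt_potential (hf : IsBddMeasurable f) (hT : 0 ≤ T) (x : E) :
    HasFDerivAt (k.potential T f) (∫ t in (0 : ℝ)..T, k.potentialGradDensity t f x) x := by
  obtain ⟨M, hM⟩ := hf.bounded
  refine intervalIntegral.hasFDerivAt_integral_of_dominated_of_fderiv_le (𝕜 := ℝ)
    (F := fun x t ↦ t * scaledAverage k.σ t f x)
    (F' := fun x t ↦ k.potentialGradDensity t f x) (s := univ) (bound := fun _ ↦ M) univ_mem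
    (Eventually.of_forall fun y ↦ (k.intervalIntegrable_potential hf T y).def'.aestronglyMeasurable)
    (k.intervalIntegrable_potential hf T x)
    (k.intervalIntegrable_potentialGradDensity hf T x).def'.aestronglyMeasurable
    (Eventually.of_forall fun t _ y _ ↦ k.norm_potentialGradDensity_le hM t y)
    intervalIntegrable_const (Eventually.of_forall fun t ht y _ ↦ ?_)
  rw [uIoc_of_le hT] at ht
  exact k.hasFDerivAt_mul_scaledAverage hf ht.1.ne' y

lemma contDiff_one_potential (hf : IsBddMeasurable f) (hT : 0 ≤ T) :
    ContDiff ℝ 1 (k.potential T f) := by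
  obtain ⟨M, hM⟩ := hf.bounded
  have hfderiv : fderiv ℝ (k.potential T f) =
      fun x ↦ ∫ t in (0 : ℝ)..T, k.potentialGradDensity t f x :=
    funext fun x ↦ (k.hasFDerivAt_potential hf hT x).fderiv
  refine contDiff_one_iff_fderiv.2
    ⟨fun x ↦ (k.hasFDerivAt_potential hf hT x).differentiableAt, ?_⟩
  rw [hfderiv]
  refine intervalIntegral.continuous_of_dominated_interval (bound := fun _ ↦ M)
    (fun y ↦ (k.intervalIntegrable_potentialGradDensity hf T y).def'.aestronglyMeasurable)
    (fun y ↦ Eventually.of_forall fun t _ ↦ k.norm_potentialGradDensity_le hM t y)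
    intervalIntegrable_const (Eventually.of_forall fun t ht ↦ ?_)
  rw [uIoc_of_le hT] at ht
  exact k.continuous_potentialGradDensity hf ht.1.ne'

lemma fderiv_potential (hf : ContDiff ℝ 1 f) (hf' : HasCompactSupport f) (hT : 0 ≤ T)
    (x v : E) : fderiv ℝ (k.potential T f) x v = k.potential T (fun y ↦ fderiv ℝ f y v) x := by
  have hbdd := IsBddMeasurable.of_hasCompactSupport hf.continuous hf'
  rw [(k.hasFDerivAt_potential hbdd hT x).fderiv, ContinuousLinearMap.intervalIntegral_apply
    (k.intervalIntegrable_potentialGradDensity hbdd T x), potential]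
  refine intervalIntegral.integral_congr fun t _ ↦ ?_
  simp only [k.potentialGradDensity_apply hbdd,
    scaledAverage_fderiv_kernel k.isUnitBallKernel_σ hf, neg_mul, neg_neg]

lemma contDiff_two_potential (hf : ContDiff ℝ 1 f) (hf' : HasCompactSupport f) (hT : 0 ≤ T) :
    ContDiff ℝ 2 (k.potential T f) := by
  have hbdd := IsBddMeasurable.of_hasCompactSupport hf.continuous hf'
  refine contDiff_succ_iff_fderiv_apply (n := 1).2
    ⟨fun x ↦ (k.hasFDerivAt_potential hbdd hT x).differentiableAt, by simp, fun v ↦ ?_⟩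
  simp only [k.fderiv_potential hf hf' hT]
  exact k.contDiff_one_potential (IsBddMeasurable.of_hasCompactSupport
    ((hf.continuous_fderiv one_ne_zero).clm_apply continuous_const) (hf'.fderiv_apply ℝ v)) hT

lemma potential_congr (hT : 0 ≤ T) (h : ∀ y ∈ closedBall x T, f y = g y) :
    k.potential T f x = k.potential T g x := by
  refine intervalIntegral.integral_congr fun t ht ↦ ?_
  rw [uIcc_of_le hT] at ht
  simp only [scaledAverage_congr k.isUnitBallKernel_σ ht.1 fun y hy ↦
    h y (closedBall_subset_closedBall ht.2 hy)]

lemma potential_mono (hf : IsBddMeasurable f) (hg : IsBddMeasurable g) (hT : 0 ≤ T)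
    (h : ∀ y ∈ closedBall x T, f y ≤ g y) : k.potential T f x ≤ k.potential T g x :=
  intervalIntegral.integral_mono_on hT (k.intervalIntegrable_potential hf T x)
    (k.intervalIntegrable_potential hg T x) fun _ ht ↦
      mul_le_mul_of_nonneg_left (scaledAverage_mono k.isUnitBallKernel_σ k.σ_nonneg hf hg ht.1
        fun y hy ↦ h y (closedBall_subset_closedBall ht.2 hy)) ht.1

lemma potential_add (hf : IsBddMeasurable f) (hg : IsBddMeasurable g) (T : ℝ) (x : E) :
    k.potential T (fun y ↦ f y + g y) x = k.potential T f x + k.potential T g x := by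
  simp only [potential, scaledAverage_add k.isUnitBallKernel_σ hf hg, mul_add]
  exact intervalIntegral.integral_add (k.intervalIntegrable_potential hf T x)
    (k.intervalIntegrable_potential hg T x)

lemma potential_const_mul (f : E → ℝ) (c T : ℝ) (x : E) :
    k.potential T (fun y ↦ c * f y) x = c * k.potential T f x := by
  simp only [potential, scaledAverage_const_mul, mul_left_comm _ c,
    intervalIntegral.integral_const_mul]

/-- The constant for which a source `a` contributes `k.strength * T ^ 2 * a` to the mean value
formula at scale `T`. -/
def strength : ℝ := (∫ z, k.σ z) / 2

lemma strength_pos : 0 < k.strength := half_pos k.integral_σ_pos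

lemma potential_const (a T : ℝ) (x : E) :
    k.potential T (fun _ ↦ a) x = k.strength * T ^ 2 * a := by
  simp only [potential, scaledAverage_const, intervalIntegral.integral_mul_const, integral_id,
    strength]
  ring

lemma scaledAverage_ρ_const (a t : ℝ) (x : E) : scaledAverage k.ρ t (fun _ ↦ a) x = a := by
  rw [scaledAverage_const, k.integral_ρ, one_mul]

end LaplaceKernel

section MeanValueFormula

open Filter Topology Metric

variable {E : Type*} [NormedAddCommGroup E] [InnerProductSpace ℝ E] [FiniteDimensional ℝ E]
  [MeasurableSpace E] [BorelSpace E] {κ w : E → ℝ}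

lemma hasDerivAt_scaledAverage (hκ : IsUnitBallKernel κ) (hw : ContDiff ℝ 1 w)
    (hw' : HasCompactSupport w) (t : ℝ) (x : E) :
    HasDerivAt (fun t ↦ scaledAverage κ t w x) (∫ z, κ z * fderiv ℝ w (x + t • z) z) t := by
  have hbdd := IsBddMeasurable.of_hasCompactSupport hw.continuous hw'
  have hcont := hw.continuous_fderiv one_ne_zero
  obtain ⟨C, hC⟩ := hcont.bounded_above_of_compact_support (hw'.fderiv ℝ)
  have hκ_cont := hκ.continuous
  refine (hasDerivAt_integral_of_dominated_loc_of_deriv_le (F := fun t z ↦ κ z * w (x + t • z))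
    (F' := fun t z ↦ κ z * fderiv ℝ w (x + t • z) z) (s := univ)
    (bound := fun z ↦ ‖κ z‖ * (C * ‖z‖)) univ_mem
    (Eventually.of_forall fun s ↦ (integrable_scaledAverage hκ hbdd s x).aestronglyMeasurable)
    (integrable_scaledAverage hκ hbdd t x)
    (Continuous.aestronglyMeasurable (by fun_prop)) (Eventually.of_forall fun z s _ ↦ ?_)
    (Continuous.integrable_of_hasCompactSupport (by fun_prop)
      hκ.hasCompactSupport.norm.mul_right) (Eventually.of_forall fun z s _ ↦ ?_)).2
  · rw [norm_mul]
    exact mul_le_mul_of_nonneg_left ((fderiv ℝ w (x + s • z)).le_of_opNorm_le (hC _) z)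
      (norm_nonneg _)
  · have hline : HasDerivAt (fun s : ℝ ↦ x + s • z) z s := by
      simpa using ((hasDerivAt_id s).smul_const z).const_add x
    exact ((hw.differentiable one_ne_zero _).hasFDerivAt.comp_hasDerivAt s hline).const_mul _

lemma scaledAverage_finset_sum {ι : Type*} (s : Finset ι) {f : ι → E → ℝ}
    (hκ : IsUnitBallKernel κ) (hf : ∀ i ∈ s, IsBddMeasurable (f i)) (t : ℝ) (x : E) :
    scaledAverage κ t (fun y ↦ ∑ i ∈ s, f i y) x = ∑ i ∈ s, scaledAverage κ t (f i) x := by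
  simp only [scaledAverage, Finset.mul_sum]
  exact integral_finsetSum _ fun i hi ↦ integrable_scaledAverage hκ (hf i hi) t x

end MeanValueFormula

section Laplacian

open Filter Topology Metric

variable {N : ℕ} {w w' : EuclideanSpace ℝ (Fin N) → ℝ} {x : EuclideanSpace ℝ (Fin N)}

lemma contDiff_partialDeriv (hw : ContDiff ℝ 2 w) (v : EuclideanSpace ℝ (Fin N)) :
    ContDiff ℝ 1 fun y ↦ fderiv ℝ w y v :=
  (hw.fderiv_right (m := 1) (by norm_num)).clm_apply contDiff_const

lemma continuous_second_partialDeriv (hw : ContDiff ℝ 2 w) (v : EuclideanSpace ℝ (Fin N)) :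
    Continuous fun y ↦ fderiv ℝ (fun y ↦ fderiv ℝ w y v) y v :=
  ((contDiff_partialDeriv hw v).continuous_fderiv one_ne_zero).clm_apply continuous_const

lemma continuous_lapl (hw : ContDiff ℝ 2 w) : Continuous (lapl w) :=
  continuous_finsetSum _ fun i _ ↦ continuous_second_partialDeriv hw (EuclideanSpace.single i 1)

lemma lapl_congr (h : w =ᶠ[𝓝 x] w') : lapl w x = lapl w' x := by
  refine Finset.sum_congr rfl fun i _ ↦ ?_
  have h_fderiv : (fun y ↦ fderiv ℝ w y (EuclideanSpace.single i 1)) =ᶠ[𝓝 x]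
      fun y ↦ fderiv ℝ w' y (EuclideanSpace.single i 1) :=
    (h.fderiv (𝕜 := ℝ)).mono fun y hy ↦ by simp only [hy]
  rw [h_fderiv.fderiv_eq]

lemma hasCompactSupport_lapl (hw : HasCompactSupport w) : HasCompactSupport (lapl w) := by
  refine HasCompactSupport.intro hw fun x hx ↦ ?_
  rw [lapl_congr (notMem_tsupport_iff_eventuallyEq.1 hx)]
  simp [lapl]

lemma LaplaceKernel.ρ_mul_apply_eq_sum (k : LaplaceKernel (EuclideanSpace ℝ (Fin N)))
    (L : EuclideanSpace ℝ (Fin N) →L[ℝ] ℝ) (z : EuclideanSpace ℝ (Fin N)) :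
    k.ρ z * L z = ∑ i, -(fderiv ℝ k.σ z (EuclideanSpace.single i 1) *
      L (EuclideanSpace.single i 1)) := by
  have hz : L z = ∑ i, z i * L (EuclideanSpace.single i 1) := by
    conv_lhs => rw [← (EuclideanSpace.basisFun (Fin N) ℝ).sum_repr z]
    simp
  rw [hz, Finset.mul_sum]
  refine Finset.sum_congr rfl fun i _ ↦ ?_
  simp only [(k.hasFDerivAt_σ z).fderiv, smul_apply, innerSL_apply_apply, smul_eq_mul,
    EuclideanSpace.inner_single_right, one_mul, conj_trivial]
  ring

namespace LaplaceKernel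

variable (k : LaplaceKernel (EuclideanSpace ℝ (Fin N)))

lemma integral_ρ_mul_fderiv_eq (hw : ContDiff ℝ 2 w) (hw' : HasCompactSupport w) (t : ℝ)
    (x : EuclideanSpace ℝ (Fin N)) :
    ∫ z, k.ρ z * fderiv ℝ w (x + t • z) z = t * scaledAverage k.σ t (lapl w) x := by
  have hpartial (i : Fin N) : IsBddMeasurable fun y ↦ fderiv ℝ w y (EuclideanSpace.single i 1) :=
    .of_hasCompactSupport (contDiff_partialDeriv hw _).continuous (hw'.fderiv_apply ℝ _)
  have hsecond (i : Fin N) : IsBddMeasurable fun y ↦ fderiv ℝ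
      (fun y ↦ fderiv ℝ w y (EuclideanSpace.single i 1)) y (EuclideanSpace.single i 1) :=
    .of_hasCompactSupport (continuous_second_partialDeriv hw _)
      ((hw'.fderiv_apply ℝ _).fderiv_apply ℝ _)
  have hparts (i : Fin N) := scaledAverage_fderiv_kernel k.isUnitBallKernel_σ
    (contDiff_partialDeriv hw (EuclideanSpace.single i 1)) t x (EuclideanSpace.single i 1)
  calc
    _ = ∫ z, ∑ i, -(fderiv ℝ k.σ z (EuclideanSpace.single i 1) *
          fderiv ℝ w (x + t • z) (EuclideanSpace.single i 1)) := by
      simp only [k.ρ_mul_apply_eq_sum]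
    _ = ∑ i, -scaledAverage (fun z ↦ fderiv ℝ k.σ z (EuclideanSpace.single i 1)) t
          (fun y ↦ fderiv ℝ w y (EuclideanSpace.single i 1)) x := by
      rw [integral_finsetSum (f := fun i z ↦ -(fderiv ℝ k.σ z (EuclideanSpace.single i 1) *
          fderiv ℝ w (x + t • z) (EuclideanSpace.single i 1))) _ fun i _ ↦
        (integrable_scaledAverage (k.isUnitBallKernel_σ.fderiv_apply _) (hpartial i) t x).neg]
      simp only [integral_neg, scaledAverage]
    _ = t * scaledAverage k.σ t (lapl w) x := by
      simp only [hparts, neg_mul, neg_neg]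
      rw [← Finset.mul_sum]
      exact congrArg (t * ·) (scaledAverage_finset_sum _ k.isUnitBallKernel_σ
        (fun i _ ↦ hsecond i) t x).symm

lemma eq_scaledAverage_add_potential (hw : ContDiff ℝ 2 w) (hw' : HasCompactSupport w) (T : ℝ)
    (x : EuclideanSpace ℝ (Fin N)) :
    w x = scaledAverage k.ρ T w x + k.potential T (fun y ↦ -lapl w y) x := by
  have hlapl := IsBddMeasurable.of_hasCompactSupport (continuous_lapl hw)
    (hasCompactSupport_lapl hw')
  have hFTC : k.potential T (lapl w) x = scaledAverage k.ρ T w x - scaledAverage k.ρ 0 w x :=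
    intervalIntegral.integral_eq_sub_of_hasDerivAt (fun t _ ↦
      (hasDerivAt_scaledAverage k.isUnitBallKernel_ρ (hw.of_le (by norm_num)) hw' t x).congr_deriv
        (k.integral_ρ_mul_fderiv_eq hw hw' t x)) (k.intervalIntegrable_potential hlapl T x)
  have hneg := k.potential_const_mul (lapl w) (-1) T x
  simp only [neg_one_mul] at hneg
  rw [hneg, hFTC, scaledAverage_zero_scale, k.integral_ρ]
  ring

end LaplaceKernel

end Laplacian

section Localization

open Filter Topology

variable {E : Type*} [NormedAddCommGroup E] [NormedSpace ℝ E] [FiniteDimensional ℝ E]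

lemma exists_contDiff_hasCompactSupport_eventuallyEq {K Ω : Set E} {w : E → ℝ} {n : ℕ∞}
    (hK : IsCompact K) (hΩ : IsOpen Ω) (hKΩ : K ⊆ Ω) (hw : ContDiffOn ℝ n w Ω) :
    ∃ w' : E → ℝ, ContDiff ℝ n w' ∧ HasCompactSupport w' ∧ w' =ᶠ[𝓝ˢ K] w := by
  obtain ⟨L, hL, hKL, hLΩ⟩ := exists_compact_between hK hΩ hKΩ
  obtain ⟨χ, hχ_one, hχ_zero, -⟩ := exists_contMDiffMap_one_nhds_of_subset_interior (n := n)
    (modelWithCornersSelf ℝ E) hK.isClosed hKL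
  refine ⟨fun x ↦ χ x * w x, contDiff_iff_contDiffAt.2 fun x ↦ ?_,
    HasCompactSupport.intro hL fun x hx ↦ by rw [hχ_zero x hx, zero_mul],
    hχ_one.mono fun x hx ↦ by simp only [hx, one_mul]⟩
  by_cases hx : x ∈ Ω
  · exact (contMDiff_iff_contDiff.1 χ.2).contDiffAt.mul (hw.contDiffAt (hΩ.mem_nhds hx))
  · have h_zero : (fun x ↦ χ x * w x) =ᶠ[𝓝 x] fun _ ↦ 0 := by
      filter_upwards [hL.isClosed.isOpen_compl.mem_nhds fun h ↦ hx (hLΩ h)] with y hy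
      rw [hχ_zero y hy, zero_mul]
    exact contDiffAt_const.congr_of_eventuallyEq h_zero

end Localization

/-- Continuous functions vanishing outside `Ω`: continuous functions on the closure of `Ω` with
zero boundary values, extended by zero. -/
structure ContVanishingOff {X : Type*} [TopologicalSpace X] (Ω : Set X) (u : X → ℝ) : Prop where
  continuous : Continuous u
  eq_zero : ∀ x ∉ Ω, u x = 0

namespace ContVanishingOff

variable {X : Type*}

section TopologicalSpace

variable [TopologicalSpace X] {Ω : Set X} {u v : X → ℝ}

lemma indicator (hu : ContinuousOn u (closure Ω)) (h : ∀ x ∈ frontier Ω, u x = 0) :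
    ContVanishingOff Ω (Ω.indicator u) :=
  ⟨continuous_indicator h hu, fun _ hx ↦ indicator_of_notMem hx u⟩

lemma zero : ContVanishingOff Ω fun _ : X ↦ (0 : ℝ) := ⟨continuous_const, fun _ _ ↦ rfl⟩

lemma add (hu : ContVanishingOff Ω u) (hv : ContVanishingOff Ω v) :
    ContVanishingOff Ω fun x ↦ u x + v x :=
  ⟨hu.continuous.add hv.continuous, fun x hx ↦ by rw [hu.eq_zero x hx, hv.eq_zero x hx, add_zero]⟩

lemma const_mul (hu : ContVanishingOff Ω u) (c : ℝ) : ContVanishingOff Ω fun x ↦ c * u x :=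
  ⟨continuous_const.mul hu.continuous, fun x hx ↦ by rw [hu.eq_zero x hx, mul_zero]⟩

lemma sub (hu : ContVanishingOff Ω u) (hv : ContVanishingOff Ω v) :
    ContVanishingOff Ω fun x ↦ u x - v x :=
  ⟨hu.continuous.sub hv.continuous, fun x hx ↦ by rw [hu.eq_zero x hx, hv.eq_zero x hx, sub_self]⟩

lemma comp {G : ℝ → ℝ} (hu : ContVanishingOff Ω u) (hG : Continuous G) (hG0 : G 0 = 0) :
    ContVanishingOff Ω fun x ↦ G (u x) :=
  ⟨hG.comp hu.continuous, fun x hx ↦ by rw [hu.eq_zero x hx, hG0]⟩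

end TopologicalSpace

variable [PseudoMetricSpace X] [ProperSpace X] {Ω : Set X} {u : X → ℝ}

lemma hasCompactSupport (hu : ContVanishingOff Ω u) (hΩ : Bornology.IsBounded Ω) :
    HasCompactSupport u :=
  HasCompactSupport.intro hΩ.isCompact_closure fun x hx ↦
    hu.eq_zero x fun hx' ↦ hx (subset_closure hx')

lemma uniformContinuous (hu : ContVanishingOff Ω u) (hΩ : Bornology.IsBounded Ω) :
    UniformContinuous u :=
  (hu.hasCompactSupport hΩ).uniformContinuous_of_continuous hu.continuous

lemma exists_isMinOn_of_neg (hu : ContVanishingOff Ω u) (hΩ : Bornology.IsBounded Ω) {x : X}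
    (hx : u x < 0) : ∃ y ∈ Ω, ∀ z, u y ≤ u z := by
  have : Nonempty X := ⟨x⟩
  obtain ⟨y, hy⟩ := hu.continuous.exists_forall_le_of_hasCompactSupport (hu.hasCompactSupport hΩ)
  exact ⟨y, by_contra fun h ↦ ((hy x).trans_lt hx).ne (hu.eq_zero y h), hy⟩

end ContVanishingOff

lemma ContVanishingOff.isBddMeasurable {E : Type*} [NormedAddCommGroup E] [ProperSpace E]
    [MeasurableSpace E] [BorelSpace E] {Ω : Set E} {u : E → ℝ} (hu : ContVanishingOff Ω u)
    (hΩ : Bornology.IsBounded Ω) : IsBddMeasurable u :=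
  .of_hasCompactSupport hu.continuous (hu.hasCompactSupport hΩ)

lemma le_of_forall_pos_le_add_mul {a b c : ℝ} (h : ∀ ε, 0 < ε → a ≤ b + ε * c) : a ≤ b := by
  have hlim : Filter.Tendsto (fun ε ↦ b + ε * c) (nhdsWithin 0 (Ioi 0)) (nhds b) := by
    simpa using ((by fun_prop : Continuous fun ε ↦ b + ε * c).tendsto 0).mono_left
      nhdsWithin_le_nhds
  exact ge_of_tendsto hlim (eventually_mem_nhdsWithin.mono h)

section MeanValueSolutions

open Metric Topology

variable {E : Type*} [NormedAddCommGroup E] [InnerProductSpace ℝ E] [FiniteDimensional ℝ E]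
  [MeasurableSpace E] [BorelSpace E] {k : LaplaceKernel E} {Ω : Set E} {u v w f g ξ : E → ℝ}
  {x : E}

namespace LaplaceKernel

/-- Solutions of the Poisson equation `-Δu = f` in `Ω` in mean value form, a formulation which makes
sense for merely bounded `u` and `f` and is stable under uniform limits. -/
def IsMeanValueSolution (k : LaplaceKernel E) (Ω : Set E) (u f : E → ℝ) : Prop :=
  ∀ x T, 0 < T → closedBall x T ⊆ Ω → u x = scaledAverage k.ρ T u x + k.potential T f x

lemma IsMeanValueSolution.congr (h : k.IsMeanValueSolution Ω u f) (hu : EqOn u v Ω)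
    (hf : EqOn f g Ω) : k.IsMeanValueSolution Ω v g := by
  intro x T hT hball
  rw [← hu (hball (mem_closedBall_self hT.le)), h x T hT hball,
    scaledAverage_congr k.isUnitBallKernel_ρ hT.le fun y hy ↦ hu (hball hy),
    k.potential_congr hT.le fun y hy ↦ hf (hball hy)]

lemma IsMeanValueSolution.const_mul (h : k.IsMeanValueSolution Ω u f) (c : ℝ) :
    k.IsMeanValueSolution Ω (fun x ↦ c * u x) fun x ↦ c * f x := by
  intro x T hT hball
  rw [scaledAverage_const_mul, k.potential_const_mul, ← mul_add, ← h x T hT hball]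

variable (k) in
lemma isMeanValueSolution_zero (Ω : Set E) :
    k.IsMeanValueSolution Ω (fun _ ↦ 0) fun _ ↦ 0 := by
  intro x T _ _
  rw [k.scaledAverage_ρ_const, k.potential_const, mul_zero, add_zero]

lemma isMeanValueSolution_of_contDiffOn {N : ℕ} (k : LaplaceKernel (EuclideanSpace ℝ (Fin N)))
    {Ω : Set (EuclideanSpace ℝ (Fin N))} {u f : EuclideanSpace ℝ (Fin N) → ℝ} (hΩ : IsOpen Ω)
    (hu : ContDiffOn ℝ 2 u Ω) (hf : ∀ x ∈ Ω, -lapl u x = f x) :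
    k.IsMeanValueSolution Ω u f := by
  intro x T hT hball
  obtain ⟨u', hu', hu'_supp, hu'_eq⟩ := exists_contDiff_hasCompactSupport_eventuallyEq (n := 2)
    (isCompact_closedBall x T) hΩ hball hu
  have h_eq : EqOn u' u (closedBall x T) := hu'_eq.self_of_nhdsSet
  have h_lapl : EqOn (fun y ↦ -lapl u' y) f (closedBall x T) := fun y hy ↦ by
    simp only [← hf y (hball hy), lapl_congr (eventually_nhdsSet_iff_forall.1 hu'_eq y hy)]
  rw [← h_eq (mem_closedBall_self hT.le), k.eq_scaledAverage_add_potential hu' hu'_supp T x,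
    scaledAverage_congr k.isUnitBallKernel_ρ hT.le h_eq, k.potential_congr hT.le h_lapl]

lemma nonneg_of_forall_exists_scaledAverage_lt (hΩ : Bornology.IsBounded Ω)
    (hw : ContVanishingOff Ω w) (h : ∀ x ∈ Ω, ∃ T, 0 ≤ T ∧ scaledAverage k.ρ T w x < w x) (x : E) :
    0 ≤ w x := by
  by_contra! hx
  obtain ⟨y, hy, hmin⟩ := hw.exists_isMinOn_of_neg hΩ hx
  obtain ⟨T, hT, hlt⟩ := h y hy
  have hle : w y ≤ scaledAverage k.ρ T w y := by
    rw [← k.scaledAverage_ρ_const (w y) T y]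
    exact scaledAverage_mono k.isUnitBallKernel_ρ k.ρ_nonneg (.const _) (hw.isBddMeasurable hΩ) hT
      fun z _ ↦ hmin z
  exact hle.not_gt hlt

end LaplaceKernel

/-- A bounded open set together with a solution `ξ` of `-Δξ = 1` with zero boundary values; `ξ` is
the barrier behind every estimate up to the boundary. -/
structure IsTorsionDomain (k : LaplaceKernel E) (Ω : Set E) (ξ : E → ℝ) : Prop where
  isOpen : IsOpen Ω
  isBounded : Bornology.IsBounded Ω
  contVanishingOff : ContVanishingOff Ω ξ
  isMeanValueSolution : k.IsMeanValueSolution Ω ξ fun _ ↦ 1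

namespace IsTorsionDomain

lemma isBddMeasurable (h : IsTorsionDomain k Ω ξ) (hu : ContVanishingOff Ω u) :
    IsBddMeasurable u :=
  hu.isBddMeasurable h.isBounded

lemma exists_closedBall_subset (h : IsTorsionDomain k Ω ξ) (hx : x ∈ Ω) :
    ∃ T, 0 < T ∧ closedBall x T ⊆ Ω :=
  nhds_basis_closedBall.mem_iff.1 (h.isOpen.mem_nhds hx)

lemma le_of_isMeanValueSolution (h : IsTorsionDomain k Ω ξ) (hu : ContVanishingOff Ω u)
    (hv : ContVanishingOff Ω v) (hf : IsBddMeasurable f) (hg : IsBddMeasurable g)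
    (huf : k.IsMeanValueSolution Ω u f) (hvg : k.IsMeanValueSolution Ω v g)
    (hfg : ∀ x ∈ Ω, f x ≤ g x) (x : E) : u x ≤ v x := by
  have hξ := h.contVanishingOff
  have hξ_bdd := h.isBddMeasurable hξ
  have hvu_bdd := (h.isBddMeasurable hv).sub (h.isBddMeasurable hu)
  have hperturbed (ε : ℝ) (hε : 0 < ε) : 0 ≤ v x - u x + ε * ξ x := by
    refine k.nonneg_of_forall_exists_scaledAverage_lt h.isBounded
      ((hv.sub hu).add (hξ.const_mul ε)) (fun y hy ↦ ?_) x
    obtain ⟨T, hT, hball⟩ := h.exists_closedBall_subset hy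
    refine ⟨T, hT.le, ?_⟩
    have hle := k.potential_mono hf hg hT.le fun z hz ↦ hfg z (hball hz)
    have hpos : 0 < ε * k.potential T (fun _ ↦ 1) y := by
      have := k.strength_pos
      rw [k.potential_const]
      positivity
    rw [scaledAverage_add k.isUnitBallKernel_ρ hvu_bdd (hξ_bdd.const_mul ε),
      scaledAverage_sub k.isUnitBallKernel_ρ (h.isBddMeasurable hv) (h.isBddMeasurable hu),
      scaledAverage_const_mul, huf y T hT hball, hvg y T hT hball,
      h.isMeanValueSolution y T hT hball, mul_add]
    linarith
  exact sub_nonneg.1 (le_of_forall_pos_le_add_mul hperturbed)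

lemma nonneg (h : IsTorsionDomain k Ω ξ) (x : E) : 0 ≤ ξ x :=
  h.le_of_isMeanValueSolution .zero h.contVanishingOff (.const 0) (.const 1)
    (k.isMeanValueSolution_zero Ω) h.isMeanValueSolution (fun _ _ ↦ zero_le_one) x

end IsTorsionDomain

end MeanValueSolutions

section Regularity

open Filter Topology Metric

variable {E : Type*} [NormedAddCommGroup E] [InnerProductSpace ℝ E] [FiniteDimensional ℝ E]
  [MeasurableSpace E] [BorelSpace E] {k : LaplaceKernel E} {Ω : Set E} {u f g : E → ℝ} {x : E}

namespace LaplaceKernel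

lemma IsMeanValueSolution.exists_eventually_eq (h : k.IsMeanValueSolution Ω u f) (hΩ : IsOpen Ω)
    (hx : x ∈ Ω) : ∃ T, 0 < T ∧ closedBall x (2 * T) ⊆ Ω ∧
      ∀ᶠ y in 𝓝 x, closedBall y T ⊆ closedBall x (2 * T) ∧
        u y = scaledAverage k.ρ T u y + k.potential T f y := by
  obtain ⟨r, hr, hball⟩ := nhds_basis_closedBall.mem_iff.1 (hΩ.mem_nhds hx)
  rw [← mul_div_cancel₀ r two_ne_zero] at hball
  refine ⟨r / 2, half_pos hr, hball, ?_⟩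
  filter_upwards [ball_mem_nhds x (half_pos hr)] with y hy
  have hsub : closedBall y (r / 2) ⊆ closedBall x (2 * (r / 2)) :=
    closedBall_subset_closedBall' (by linarith [mem_ball.1 hy])
  exact ⟨hsub, h y _ (half_pos hr) (hsub.trans hball)⟩

lemma IsMeanValueSolution.contDiffOn_one (h : k.IsMeanValueSolution Ω u f) (hΩ : IsOpen Ω)
    (hu : IsBddMeasurable u) (hf : IsBddMeasurable f) : ContDiffOn ℝ 1 u Ω := by
  intro x hx
  obtain ⟨T, hT, -, h_eq⟩ := h.exists_eventually_eq hΩ hx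
  have hsmooth : ContDiff ℝ 1 fun y ↦ scaledAverage k.ρ T u y + k.potential T f y :=
    ((contDiff_scaledAverage k.isUnitBallKernel_ρ hu hT.ne').of_le (by norm_num)).add
      (k.contDiff_one_potential hf hT.le)
  exact (hsmooth.contDiffAt.congr_of_eventuallyEq (h_eq.mono fun _ hy ↦ hy.2)).contDiffWithinAt

lemma IsMeanValueSolution.contDiffOn_two (h : k.IsMeanValueSolution Ω u f) (hΩ : IsOpen Ω)
    (hu : IsBddMeasurable u) (hf : ContDiffOn ℝ 1 f Ω) : ContDiffOn ℝ 2 u Ω := by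
  intro x hx
  obtain ⟨T, hT, hball, h_eq⟩ := h.exists_eventually_eq hΩ hx
  obtain ⟨f', hf', hf'_supp, hf'_eq⟩ := exists_contDiff_hasCompactSupport_eventuallyEq (n := 1)
    (isCompact_closedBall x (2 * T)) hΩ hball hf
  have hsmooth : ContDiff ℝ 2 fun y ↦ scaledAverage k.ρ T u y + k.potential T f' y :=
    ((contDiff_scaledAverage k.isUnitBallKernel_ρ hu hT.ne').of_le
      (WithTop.coe_le_coe.2 le_top)).add (k.contDiff_two_potential hf' hf'_supp hT.le)
  refine (hsmooth.contDiffAt.congr_of_eventuallyEq (h_eq.mono fun y hy ↦ ?_)).contDiffWithinAt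
  have hf'f : k.potential T f' y = k.potential T f y :=
    k.potential_congr hT.le fun z hz ↦ hf'_eq.self_of_nhdsSet (hy.1 hz)
  rw [hy.2, ← hf'f]

variable (k) in
lemma potential_add_const (hf : IsBddMeasurable f) (c T : ℝ) (x : E) :
    k.potential T (fun y ↦ f y + c) x = k.potential T f x + k.strength * T ^ 2 * c := by
  rw [k.potential_add hf (.const c), k.potential_const]

variable (k) in
lemma le_of_frequently_potential_le (hf : IsBddMeasurable f) (hg : IsBddMeasurable g)
    (hfx : ContinuousAt f x) (hgx : ContinuousAt g x)
    (h : ∃ᶠ T in 𝓝[>] (0 : ℝ), k.potential T f x ≤ k.potential T g x) : f x ≤ g x := by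
  by_contra! hlt
  obtain ⟨δ, hδ, hlt⟩ : ∃ δ, 0 < δ ∧ g x + δ < f x :=
    ⟨(f x - g x) / 2, by linarith, by linarith⟩
  obtain ⟨r, hr, hball⟩ := nhds_basis_closedBall.mem_iff.1
    ((hgx.add (continuousAt_const (y := δ))).eventually_lt hfx hlt)
  obtain ⟨T, hle, hT, hTr⟩ := (h.and_eventually (Ioo_mem_nhdsGT hr)).exists
  have hmono := k.potential_mono (hg.add (.const δ)) hf hT.le (x := x)
    fun y hy ↦ (hball (closedBall_subset_closedBall hTr.le hy)).le
  rw [k.potential_add_const hg] at hmono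
  have hpos : 0 < k.strength * T ^ 2 * δ := by
    have := k.strength_pos
    positivity
  linarith

variable (k) in
lemma eq_of_eventually_potential_eq (hf : IsBddMeasurable f) (hg : IsBddMeasurable g)
    (hfx : ContinuousAt f x) (hgx : ContinuousAt g x)
    (h : ∀ᶠ T in 𝓝[>] (0 : ℝ), k.potential T f x = k.potential T g x) : f x = g x :=
  le_antisymm
    (k.le_of_frequently_potential_le hf hg hfx hgx (h.mono fun _ ↦ le_of_eq).frequently)
    (k.le_of_frequently_potential_le hg hf hgx hfx (h.mono fun _ ↦ ge_of_eq).frequently)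

lemma IsMeanValueSolution.neg_lapl_eq {N : ℕ} {k : LaplaceKernel (EuclideanSpace ℝ (Fin N))}
    {Ω : Set (EuclideanSpace ℝ (Fin N))} {u f : EuclideanSpace ℝ (Fin N) → ℝ}
    (h : k.IsMeanValueSolution Ω u f) (hΩ : IsOpen Ω) (hu : ContDiffOn ℝ 2 u Ω)
    (hf : IsBddMeasurable f) (hf' : ContinuousOn f Ω) {x : EuclideanSpace ℝ (Fin N)} (hx : x ∈ Ω) :
    -lapl u x = f x := by
  obtain ⟨r, hr, hball⟩ := nhds_basis_closedBall.mem_iff.1 (hΩ.mem_nhds hx)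
  obtain ⟨w, hw, hw_supp, hw_eq⟩ := exists_contDiff_hasCompactSupport_eventuallyEq (n := 2)
    (isCompact_closedBall x r) hΩ hball hu
  have hlapl : IsBddMeasurable fun y ↦ -lapl w y :=
    .of_hasCompactSupport (continuous_lapl hw).neg (hasCompactSupport_lapl hw_supp).neg
  rw [← lapl_congr (eventually_nhdsSet_iff_forall.1 hw_eq x (mem_closedBall_self hr.le))]
  refine k.eq_of_eventually_potential_eq hlapl hf (continuous_lapl hw).neg.continuousAt
    (hf'.continuousAt (hΩ.mem_nhds hx)) ?_
  filter_upwards [Ioo_mem_nhdsGT hr] with T hT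
  have hsub : closedBall x T ⊆ closedBall x r := closedBall_subset_closedBall hT.2.le
  have hwu : EqOn w u (closedBall x T) := fun y hy ↦ hw_eq.self_of_nhdsSet (hsub hy)
  have hmv := k.eq_scaledAverage_add_potential hw hw_supp T x
  rw [hwu (mem_closedBall_self hT.1.le),
    scaledAverage_congr k.isUnitBallKernel_ρ hT.1.le hwu, h x T hT.1 (hsub.trans hball)] at hmv
  exact (add_left_cancel hmv).symm

end LaplaceKernel

end Regularity

section Stability

open Filter Topology Metric

variable {E : Type*} [NormedAddCommGroup E] [InnerProductSpace ℝ E] [FiniteDimensional ℝ E]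
  [MeasurableSpace E] [BorelSpace E] (k : LaplaceKernel E) {f g : E → ℝ} {T η : ℝ} {x : E}

namespace LaplaceKernel

lemma potential_le_add (hf : IsBddMeasurable f) (hg : IsBddMeasurable g) (hT : 0 ≤ T)
    (h : ∀ y ∈ closedBall x T, f y ≤ g y + η) :
    k.potential T f x ≤ k.potential T g x + k.strength * T ^ 2 * η := by
  rw [← k.potential_add_const hg]
  exact k.potential_mono hf (hg.add (.const η)) hT h

lemma abs_potential_sub_le (hf : IsBddMeasurable f) (hg : IsBddMeasurable g) (hT : 0 ≤ T)
    (h : ∀ y ∈ closedBall x T, |f y - g y| ≤ η) :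
    |k.potential T f x - k.potential T g x| ≤ k.strength * T ^ 2 * η :=
  abs_sub_le_iff.2
    ⟨sub_le_iff_le_add'.2 <| k.potential_le_add hf hg hT fun y hy ↦
      sub_le_iff_le_add'.1 (abs_sub_le_iff.1 (h y hy)).1,
    sub_le_iff_le_add'.2 <| k.potential_le_add hg hf hT fun y hy ↦
      sub_le_iff_le_add'.1 (abs_sub_le_iff.1 (h y hy)).2⟩

end LaplaceKernel

lemma IsBddMeasurable.of_tendsto {α : Type*} [MeasurableSpace α] {v : ℕ → α → ℝ} {u : α → ℝ}
    {M : ℝ} (hv : ∀ n, Measurable (v n)) (hM : ∀ n x, |v n x| ≤ M)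
    (hlim : ∀ x, Tendsto (fun n ↦ v n x) atTop (𝓝 (u x))) : IsBddMeasurable u :=
  ⟨measurable_of_tendsto_metrizable hv (tendsto_pi_nhds.2 hlim), M,
    fun x ↦ le_of_tendsto' (hlim x).abs fun n ↦ hM n x⟩

lemma tendsto_scaledAverage {κ : E → ℝ} (hκ : IsUnitBallKernel κ) {v : ℕ → E → ℝ} {u : E → ℝ}
    {M : ℝ} (hv : ∀ n, Measurable (v n)) (hM : ∀ n x, |v n x| ≤ M)
    (hlim : ∀ x, Tendsto (fun n ↦ v n x) atTop (𝓝 (u x))) (t : ℝ) (x : E) :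
    Tendsto (fun n ↦ scaledAverage κ t (v n) x) atTop (𝓝 (scaledAverage κ t u x)) := by
  refine tendsto_integral_of_dominated_convergence (fun z ↦ |κ z| * M)
    (fun n ↦ (integrable_scaledAverage hκ ⟨hv n, M, hM n⟩ t x).aestronglyMeasurable)
    (hκ.integrable.abs.mul_const M) (fun n ↦ Eventually.of_forall fun z ↦ ?_)
    (Eventually.of_forall fun z ↦ (hlim _).const_mul _)
  rw [norm_mul]
  exact mul_le_mul_of_nonneg_left (hM n _) (norm_nonneg _)

lemma LaplaceKernel.tendsto_potential {v : ℕ → E → ℝ} {u : E → ℝ} {M : ℝ}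
    (hv : ∀ n, Measurable (v n)) (hM : ∀ n x, |v n x| ≤ M)
    (hlim : ∀ x, Tendsto (fun n ↦ v n x) atTop (𝓝 (u x))) (T : ℝ) (x : E) :
    Tendsto (fun n ↦ k.potential T (v n) x) atTop (𝓝 (k.potential T u x)) := by
  refine intervalIntegral.tendsto_integral_filter_of_dominated_convergence
    (fun t ↦ |t| * ((∫ z, |k.σ z|) * M)) (Eventually.of_forall fun n ↦
      (k.intervalIntegrable_potential ⟨hv n, M, hM n⟩ T x).def'.aestronglyMeasurable)
    (Eventually.of_forall fun n ↦ Eventually.of_forall fun t _ ↦ ?_)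
    (Continuous.intervalIntegrable (by fun_prop) _ _) (Eventually.of_forall fun t _ ↦
      (tendsto_scaledAverage k.isUnitBallKernel_σ hv hM hlim t x).const_mul t)
  rw [norm_mul]
  exact mul_le_mul_of_nonneg_left (abs_scaledAverage_le k.isUnitBallKernel_σ (hv n) (hM n) t x)
    (norm_nonneg _)

end Stability

section MonotoneIteration

open Filter Topology

lemma exists_tendsto_iterate_of_monotoneOn {α : Type*} {K : Set (α → ℝ)} {b B : α → ℝ}
    {S : (α → ℝ) → α → ℝ} (hb : b ∈ K) (hK : K ⊆ Icc b B) (hS : MapsTo S K K)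
    (hmono : MonotoneOn S K) : ∃ u, Tendsto (fun n ↦ S^[n] b) atTop (𝓝 u) := by
  have hmem (n : ℕ) : S^[n] b ∈ K := hS.iterate n hb
  have hstep (n : ℕ) : S^[n] b ≤ S^[n + 1] b := by
    induction n with
    | zero => exact (hK (hmem 1)).1
    | succ n ih =>
      rw [Function.iterate_succ_apply', Function.iterate_succ_apply']
      exact hmono (hmem n) (hmem (n + 1)) ih
  exact ⟨_, tendsto_atTop_ciSup (monotone_nat_of_le_succ hstep)
    ⟨B, forall_mem_range.2 fun n ↦ (hK (hmem n)).2⟩⟩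

end MonotoneIteration

section AsymptoticEquicontinuity

open Filter Topology Metric

/-- A family of possibly discontinuous functions whose oscillation at small distances becomes small
along the filter `F`; the discrete solutions below are of this kind. -/
def IsAsymptoticallyEquicontinuous {ι X : Type*} [PseudoMetricSpace X] (F : Filter ι)
    (v : ι → X → ℝ) : Prop :=
  ∀ η, 0 < η → ∃ δ, 0 < δ ∧ ∀ᶠ n in F, ∀ x y, dist x y < δ → dist (v n x) (v n y) ≤ η

namespace IsAsymptoticallyEquicontinuous

variable {ι X : Type*} [PseudoMetricSpace X] {F : Filter ι} [NeBot F] {v : ι → X → ℝ} {u : X → ℝ}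

lemma limit (hv : IsAsymptoticallyEquicontinuous F v) (hu : Tendsto v F (𝓝 u)) {η : ℝ}
    (hη : 0 < η) : ∃ δ, 0 < δ ∧ ∀ x y, dist x y < δ → dist (u x) (u y) ≤ η := by
  obtain ⟨δ, hδ, h⟩ := hv η hη
  exact ⟨δ, hδ, fun x y hxy ↦ le_of_tendsto
    ((tendsto_pi_nhds.1 hu x).dist (tendsto_pi_nhds.1 hu y)) (h.mono fun n hn ↦ hn x y hxy)⟩

lemma continuous (hv : IsAsymptoticallyEquicontinuous F v) (hu : Tendsto v F (𝓝 u)) :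
    Continuous u := by
  refine Metric.continuous_iff.2 fun x ε hε ↦ ?_
  obtain ⟨δ, hδ, h⟩ := hv.limit hu (half_pos hε)
  exact ⟨δ, hδ, fun y hy ↦ (h y x hy).trans_lt (half_lt_self hε)⟩

lemma tendstoUniformlyOn (hv : IsAsymptoticallyEquicontinuous F v) (hu : Tendsto v F (𝓝 u))
    {K : Set X} (hK : IsCompact K) : TendstoUniformlyOn v u F K := by
  refine Metric.tendstoUniformlyOn_iff.2 fun ε hε ↦ ?_
  obtain ⟨δ, hδ, hvδ⟩ := hv (ε / 3) (by positivity)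
  obtain ⟨δ', hδ', huδ'⟩ := hv.limit hu (η := ε / 3) (by positivity)
  obtain ⟨t, -, ht, hcover⟩ := hK.finite_cover_balls (lt_min hδ hδ')
  have hcenters : ∀ᶠ n in F, ∀ y ∈ t, dist (v n y) (u y) < ε / 3 :=
    (eventually_all_finite ht).2 fun y _ ↦
      Metric.tendsto_nhds.1 (tendsto_pi_nhds.1 hu y) (ε / 3) (by positivity)
  filter_upwards [hvδ, hcenters] with n hn hn' x hx
  obtain ⟨y, hy, hxy⟩ := mem_iUnion₂.1 (hcover hx)
  rw [mem_ball, lt_min_iff] at hxy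
  have huxy := huδ' x y hxy.2
  have hvyx := hn y x (by rw [dist_comm]; exact hxy.1)
  have hyt := hn' y hy
  rw [dist_comm] at hyt
  linarith [dist_triangle4 (u x) (u y) (v n y) (v n x)]

end IsAsymptoticallyEquicontinuous

end AsymptoticEquicontinuity

section DiscreteProblem

open Filter Topology Metric

/-- The points of `Ω` at distance more than `h` from the complement: those from which a random walk
with steps of length at most `h` cannot leave `Ω` in one step. -/
def innerRegion {X : Type*} [PseudoMetricSpace X] (Ω : Set X) (h : ℝ) : Set X :=
  {x | closedBall x h ⊆ Ω}

lemma exists_notMem_dist_le_of_notMem_innerRegion {X : Type*} [PseudoMetricSpace X] {Ω : Set X}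
    {h : ℝ} {x : X} (hx : x ∉ innerRegion Ω h) : ∃ y ∉ Ω, dist x y ≤ h := by
  obtain ⟨y, hy, hyΩ⟩ := not_subset.1 hx
  exact ⟨y, hyΩ, by rwa [dist_comm]⟩

lemma isOpen_innerRegion {X : Type*} [PseudoMetricSpace X] [ProperSpace X] {Ω : Set X}
    (hΩ : IsOpen Ω) {h : ℝ} (hh : 0 ≤ h) : IsOpen (innerRegion Ω h) := by
  have hcompl : (innerRegion Ω h)ᶜ = cthickening h Ωᶜ := by
    rw [hΩ.isClosed_compl.cthickening_eq_biUnion_closedBall hh]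
    ext x
    simp only [innerRegion, mem_compl_iff, mem_ofPred_eq, not_subset, mem_iUnion, mem_closedBall,
      dist_comm x, exists_prop, and_comm]
  rw [← isClosed_compl_iff, hcompl]
  exact isClosed_cthickening

variable {E : Type*} [NormedAddCommGroup E] [InnerProductSpace ℝ E] [FiniteDimensional ℝ E]
  [MeasurableSpace E] [BorelSpace E] {k : LaplaceKernel E} {Ω S : Set E} {u v w f g ξ : E → ℝ}
  {x : E} {h M : ℝ}

namespace LaplaceKernel

variable (k) in
lemma min_zero_add_nat_mul_le (hw : IsBddMeasurable w) {B a : ℝ} (hB : ∀ x, -B ≤ w x)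
    (ha : 0 ≤ a) (hh : 0 ≤ h) (hS : ∀ x ∈ S, scaledAverage k.ρ h w x + a ≤ w x)
    (hSc : ∀ x ∉ S, 0 ≤ w x) (n : ℕ) (x : E) : min 0 (-B + n * a) ≤ w x := by
  induction n generalizing x with
  | zero =>
    rw [Nat.cast_zero, zero_mul, add_zero]
    exact (min_le_right _ _).trans (hB x)
  | succ n ih =>
    by_cases hx : x ∈ S
    · have havg := scaledAverage_mono k.isUnitBallKernel_ρ k.ρ_nonneg (.const _) hw hh (x := x)
        fun y _ ↦ ih y
      rw [k.scaledAverage_ρ_const] at havg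
      calc min 0 (-B + (n + 1 : ℕ) * a) ≤ min (0 + a) (-B + n * a + a) :=
            min_le_min (by simpa using ha) (by push_cast; linarith)
        _ = min 0 (-B + n * a) + a := min_add_add_right _ _ _
        _ ≤ w x := by linarith [hS x hx]
    · exact (min_le_left _ _).trans (hSc x hx)

variable (k) in
lemma nonneg_of_scaledAverage_add_le (hw : IsBddMeasurable w) {a : ℝ} (ha : 0 < a) (hh : 0 ≤ h)
    (hS : ∀ x ∈ S, scaledAverage k.ρ h w x + a ≤ w x) (hSc : ∀ x ∉ S, 0 ≤ w x) (x : E) :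
    0 ≤ w x := by
  obtain ⟨B, hB⟩ := hw.bounded
  obtain ⟨n, hn⟩ := Archimedean.arch B ha
  rw [nsmul_eq_mul] at hn
  have hle := k.min_zero_add_nat_mul_le hw (fun x ↦ (abs_le.1 (hB x)).1) ha.le hh hS hSc n x
  rwa [min_eq_left (by linarith)] at hle

/-- One step of the scheme for `-Δu = f` at scale `h` with zero boundary values: the mean value
formula at scale `h` with a frozen source. -/
def discreteStep (k : LaplaceKernel E) (Ω : Set E) (f : E → ℝ) (h : ℝ) (v : E → ℝ) : E → ℝ :=
  (innerRegion Ω h).indicator fun x ↦ scaledAverage k.ρ h v x + k.strength * h ^ 2 * f x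

lemma discreteStep_of_mem (hx : x ∈ innerRegion Ω h) :
    k.discreteStep Ω f h v x = scaledAverage k.ρ h v x + k.strength * h ^ 2 * f x :=
  indicator_of_mem hx _

lemma discreteStep_of_notMem (hx : x ∉ innerRegion Ω h) : k.discreteStep Ω f h v x = 0 :=
  indicator_of_notMem hx _

lemma discreteStep_mono (hv : IsBddMeasurable v) (hw : IsBddMeasurable w) (hh : 0 ≤ h)
    (hvw : v ≤ w) : k.discreteStep Ω f h v ≤ k.discreteStep Ω f h w := fun _ ↦
  indicator_le_indicator <| add_le_add_left
    (scaledAverage_mono k.isUnitBallKernel_ρ k.ρ_nonneg hv hw hh fun y _ ↦ hvw y) _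

lemma measurable_discreteStep (hΩ : IsOpen Ω) (hf : Measurable f) (hh : 0 ≤ h)
    (hv : IsBddMeasurable v) : Measurable (k.discreteStep Ω f h v) :=
  (((stronglyMeasurable_scaledAverage k.isUnitBallKernel_ρ hv.measurable).measurable.comp
    measurable_prodMk_left).add (hf.const_mul _)).indicator (isOpen_innerRegion hΩ hh).measurableSet

/-- Bounded functions solving the discretised problem `-Δu = f` at scale `h`, that is, invariant
under `discreteStep`. -/
structure IsDiscreteSolution (k : LaplaceKernel E) (Ω : Set E) (f : E → ℝ) (h : ℝ) (u : E → ℝ) :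
    Prop where
  isBddMeasurable : IsBddMeasurable u
  discreteStep_eq : k.discreteStep Ω f h u = u

namespace IsDiscreteSolution

lemma eq_zero (hu : k.IsDiscreteSolution Ω f h u) (hx : x ∉ innerRegion Ω h) : u x = 0 := by
  rw [← hu.discreteStep_eq, discreteStep_of_notMem hx]

lemma scaledAverage_eq (hu : k.IsDiscreteSolution Ω f h u) (hx : x ∈ innerRegion Ω h) :
    scaledAverage k.ρ h u x = u x - k.strength * h ^ 2 * f x := by
  rw [eq_sub_iff_add_eq, ← discreteStep_of_mem hx, hu.discreteStep_eq]

end IsDiscreteSolution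

lemma isDiscreteSolution_of_tendsto_iterate
    (hm : ∀ n, Measurable ((k.discreteStep Ω f h)^[n] v))
    (hM : ∀ n x, |(k.discreteStep Ω f h)^[n] v x| ≤ M)
    (hu : Tendsto (fun n ↦ (k.discreteStep Ω f h)^[n] v) atTop (𝓝 u)) :
    k.IsDiscreteSolution Ω f h u := by
  have hlim := tendsto_pi_nhds.1 hu
  refine ⟨.of_tendsto hm hM hlim, funext fun x ↦ ?_⟩
  have hsucc := (tendsto_add_atTop_iff_nat 1).2 (hlim x)
  simp only [Function.iterate_succ_apply'] at hsucc
  by_cases hx : x ∈ innerRegion Ω h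
  · simp only [discreteStep_of_mem hx] at hsucc ⊢
    exact tendsto_nhds_unique
      ((tendsto_scaledAverage k.isUnitBallKernel_ρ hm hM hlim h x).add_const _) hsucc
  · simp only [discreteStep_of_notMem hx] at hsucc ⊢
    exact tendsto_nhds_unique tendsto_const_nhds hsucc

end LaplaceKernel

namespace IsTorsionDomain

lemma isBddMeasurable_self (hξ : IsTorsionDomain k Ω ξ) : IsBddMeasurable ξ :=
  hξ.isBddMeasurable hξ.contVanishingOff

lemma scaledAverage_eq (hξ : IsTorsionDomain k Ω ξ) (hh : 0 < h) (hx : x ∈ innerRegion Ω h) :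
    scaledAverage k.ρ h ξ x = ξ x - k.strength * h ^ 2 := by
  rw [eq_sub_iff_add_eq, hξ.isMeanValueSolution x h hh hx, k.potential_const, mul_one]

lemma nonneg_of_scaledAverage_le (hξ : IsTorsionDomain k Ω ξ) (hh : 0 < h)
    (hS : S ⊆ innerRegion Ω h) (hg : IsBddMeasurable g)
    (hgS : ∀ x ∈ S, scaledAverage k.ρ h g x ≤ g x) (hgSc : ∀ x ∉ S, 0 ≤ g x) (x : E) : 0 ≤ g x := by
  have := k.strength_pos
  have hεξ (ε : ℝ) := hξ.isBddMeasurable_self.const_mul ε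
  refine le_of_forall_pos_le_add_mul fun ε hε ↦ k.nonneg_of_scaledAverage_add_le
    (w := fun x ↦ g x + ε * ξ x) (hg.add (hεξ ε)) (a := ε * (k.strength * h ^ 2)) (by positivity)
    hh.le (S := S) (fun y hy ↦ ?_)
    (fun y hy ↦ add_nonneg (hgSc y hy) (mul_nonneg hε.le (hξ.nonneg y))) x
  rw [scaledAverage_add k.isUnitBallKernel_ρ hg (hεξ ε), scaledAverage_const_mul,
    hξ.scaledAverage_eq hh (hS hy)]
  linarith [hgS y hy]

lemma mapsTo_discreteStep (hξ : IsTorsionDomain k Ω ξ) (hh : 0 < h) (hf : Measurable f)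
    (hf_nonneg : ∀ x, 0 ≤ f x) (hfM : ∀ x, f x ≤ M) :
    MapsTo (k.discreteStep Ω f h) ({v | IsBddMeasurable v} ∩ Icc 0 fun x ↦ M * ξ x)
      ({v | IsBddMeasurable v} ∩ Icc 0 fun x ↦ M * ξ x) := by
  rintro v ⟨hv, hv_nonneg, hv_le⟩
  have := k.strength_pos
  have hMξ := hξ.isBddMeasurable_self.const_mul M
  have hMξ_nonneg (x : E) : 0 ≤ M * ξ x :=
    mul_nonneg ((hf_nonneg 0).trans (hfM 0)) (hξ.nonneg x)
  have hnonneg : 0 ≤ k.discreteStep Ω f h v := by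
    refine indicator_nonneg fun x _ ↦ add_nonneg ?_ (mul_nonneg (by positivity) (hf_nonneg x))
    simpa only [k.scaledAverage_ρ_const] using
      scaledAverage_mono k.isUnitBallKernel_ρ k.ρ_nonneg (.const 0) hv hh.le fun y _ ↦ hv_nonneg y
  have hle : k.discreteStep Ω f h v ≤ fun x ↦ M * ξ x := by
    refine indicator_le' (fun x hx ↦ ?_) fun x _ ↦ hMξ_nonneg x
    have havg := scaledAverage_mono k.isUnitBallKernel_ρ k.ρ_nonneg hv hMξ hh.le (x := x)
      fun y _ ↦ hv_le y
    rw [scaledAverage_const_mul, hξ.scaledAverage_eq hh hx] at havg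
    linarith [mul_le_mul_of_nonneg_left (hfM x) (by positivity : 0 ≤ k.strength * h ^ 2)]
  obtain ⟨B, hB⟩ := hMξ.bounded
  exact ⟨⟨k.measurable_discreteStep hξ.isOpen hf hh.le hv, B, fun x ↦
    (abs_le_abs_of_nonneg (hnonneg x) (hle x)).trans (hB x)⟩, hnonneg, hle⟩

lemma exists_isDiscreteSolution (hξ : IsTorsionDomain k Ω ξ) (hh : 0 < h) (hf : Measurable f)
    (hf_nonneg : ∀ x, 0 ≤ f x) (hfM : ∀ x, f x ≤ M) : ∃ u, k.IsDiscreteSolution Ω f h u := by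
  have hmaps := hξ.mapsTo_discreteStep hh hf hf_nonneg hfM
  have hzero : (0 : E → ℝ) ∈ {v | IsBddMeasurable v} ∩ Icc 0 fun x ↦ M * ξ x :=
    ⟨.const 0, le_rfl, fun x ↦ mul_nonneg ((hf_nonneg 0).trans (hfM 0)) (hξ.nonneg x)⟩
  obtain ⟨u, hu⟩ := exists_tendsto_iterate_of_monotoneOn hzero inter_subset_right hmaps
    fun v hv w hw hvw ↦ k.discreteStep_mono hv.1 hw.1 hh.le hvw
  obtain ⟨B, hB⟩ := (hξ.isBddMeasurable_self.const_mul M).bounded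
  have hmem (n : ℕ) := hmaps.iterate n hzero
  exact ⟨u, k.isDiscreteSolution_of_tendsto_iterate (fun n ↦ (hmem n).1.measurable)
    (fun n x ↦ (abs_le_abs_of_nonneg ((hmem n).2.1 x) ((hmem n).2.2 x)).trans (hB x)) hu⟩

lemma nonneg_of_isDiscreteSolution (hξ : IsTorsionDomain k Ω ξ) (hh : 0 < h)
    (hu : k.IsDiscreteSolution Ω f h u) (hf_nonneg : ∀ x, 0 ≤ f x) (x : E) : 0 ≤ u x := by
  have := k.strength_pos
  refine hξ.nonneg_of_scaledAverage_le hh subset_rfl hu.isBddMeasurable (fun y hy ↦ ?_)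
    (fun y hy ↦ (hu.eq_zero hy).ge) x
  rw [hu.scaledAverage_eq hy]
  exact sub_le_self _ (mul_nonneg (by positivity) (hf_nonneg y))

lemma isDiscreteSolution_le (hξ : IsTorsionDomain k Ω ξ) (hh : 0 < h)
    (hu : k.IsDiscreteSolution Ω f h u) (hM : 0 ≤ M) (hfM : ∀ x, f x ≤ M) (x : E) :
    u x ≤ M * ξ x := by
  have := k.strength_pos
  have hMξ := hξ.isBddMeasurable_self.const_mul M
  refine sub_nonneg.1 (hξ.nonneg_of_scaledAverage_le hh subset_rfl (hMξ.sub hu.isBddMeasurable)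
    (fun y hy ↦ ?_) (fun y hy ↦ ?_) x)
  · rw [scaledAverage_sub k.isUnitBallKernel_ρ hMξ hu.isBddMeasurable, scaledAverage_const_mul,
      hu.scaledAverage_eq hy, hξ.scaledAverage_eq hh hy]
    linarith [mul_le_mul_of_nonneg_left (hfM y) (by positivity : 0 ≤ k.strength * h ^ 2)]
  · rw [hu.eq_zero hy, sub_zero]
    exact mul_nonneg hM (hξ.nonneg y)

lemma isDiscreteSolution_translate_le (hξ : IsTorsionDomain k Ω ξ) (hh : 0 < h)
    (hu : k.IsDiscreteSolution Ω f h u) (hf_nonneg : ∀ x, 0 ≤ f x) {z : E} {e a : ℝ} (he : 0 ≤ e)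
    (ha : 0 ≤ a) (hf : ∀ y, f (y + z) ≤ f y + e)
    (hbdry : ∀ y ∉ innerRegion Ω h, u (y + z) ≤ a) (x : E) :
    u (x + z) ≤ u x + (e * ξ x + a) := by
  have := k.strength_pos
  have hu_nonneg := hξ.nonneg_of_isDiscreteSolution hh hu hf_nonneg
  have heξ_nonneg (y : E) : 0 ≤ e * ξ y := mul_nonneg he (hξ.nonneg y)
  have hu_bdd := hu.isBddMeasurable
  have hz_bdd : IsBddMeasurable fun y ↦ u (y + z) := hu_bdd.comp (measurable_add_const z)
  have heξ_bdd := hξ.isBddMeasurable_self.const_mul e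
  have ha_bdd : IsBddMeasurable fun _ : E ↦ a := .const a
  refine sub_nonneg.1 (hξ.nonneg_of_scaledAverage_le hh
    (S := innerRegion Ω h ∩ {x | x + z ∈ innerRegion Ω h}) inter_subset_left
    ((hu_bdd.add (heξ_bdd.add ha_bdd)).sub hz_bdd) (fun y hy ↦ ?_) (fun y hy ↦ ?_) x)
  · have hz : scaledAverage k.ρ h (fun y ↦ u (y + z)) y = scaledAverage k.ρ h u (y + z) := by
      simp only [scaledAverage, add_right_comm]
    rw [scaledAverage_sub k.isUnitBallKernel_ρ (hu_bdd.add (heξ_bdd.add ha_bdd)) hz_bdd,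
      scaledAverage_add k.isUnitBallKernel_ρ hu_bdd (heξ_bdd.add ha_bdd),
      scaledAverage_add k.isUnitBallKernel_ρ heξ_bdd ha_bdd, scaledAverage_const_mul,
      k.scaledAverage_ρ_const, hz, hu.scaledAverage_eq hy.1, hu.scaledAverage_eq hy.2,
      hξ.scaledAverage_eq hh hy.1]
    linarith [mul_le_mul_of_nonneg_left (hf y) (by positivity : 0 ≤ k.strength * h ^ 2)]
  · by_cases hy' : y ∈ innerRegion Ω h
    · rw [hu.eq_zero fun hyz ↦ hy ⟨hy', hyz⟩]
      linarith [hu_nonneg y, heξ_nonneg y]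
    · linarith [hbdry y hy', hu_nonneg y, heξ_nonneg y]

lemma exists_forall_isDiscreteSolution_dist_le (hξ : IsTorsionDomain k Ω ξ)
    (hf : ContVanishingOff Ω f) (hf_nonneg : ∀ x, 0 ≤ f x) {η : ℝ} (hη : 0 < η) :
    ∃ δ, 0 < δ ∧ ∀ h u, 0 < h → h < δ → k.IsDiscreteSolution Ω f h u →
      ∀ x y, dist x y < δ → dist (u x) (u y) ≤ η := by
  obtain ⟨X, hX⟩ := hξ.isBddMeasurable_self.bounded
  obtain ⟨M, hM⟩ := (hξ.isBddMeasurable hf).bounded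
  have hX_nonneg : 0 ≤ X := (abs_nonneg _).trans (hX 0)
  have hM_nonneg : 0 ≤ M := (abs_nonneg _).trans (hM 0)
  have hMξ := hξ.contVanishingOff.const_mul M
  obtain ⟨e, he, heX⟩ : ∃ e, 0 < e ∧ e * X + 2 * e = η :=
    ⟨η / (X + 2), by positivity, by field_simp⟩
  obtain ⟨δ₁, hδ₁, hfδ⟩ :=
    Metric.uniformContinuous_iff.1 (hf.uniformContinuous hξ.isBounded) e he
  obtain ⟨δ₂, hδ₂, hξδ⟩ :=
    Metric.uniformContinuous_iff.1 (hMξ.uniformContinuous hξ.isBounded) e he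
  refine ⟨min δ₁ δ₂, by positivity, fun h u hh hhδ hu ↦ ?_⟩
  have hle := hξ.isDiscreteSolution_le hh hu hM_nonneg fun x ↦ (le_abs_self _).trans (hM x)
  have htranslate (x y : E) (hxy : dist x y < min δ₁ δ₂) : u x - u y ≤ η := by
    rw [lt_min_iff, dist_eq_norm] at hxy
    have hf_near (w : E) : f (w + (x - y)) ≤ f w + e := by
      have := hfδ (a := w + (x - y)) (b := w) (by rw [dist_self_add_left]; exact hxy.1)
      linarith [(abs_lt.1 this).2]
    have hbdry (w : E) (hw : w ∉ innerRegion Ω h) : u (w + (x - y)) ≤ 2 * e := by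
      obtain ⟨w', hw', hww'⟩ := exists_notMem_dist_le_of_notMem_innerRegion hw
      have hnear := hξδ (a := w + (x - y)) (b := w) (by rw [dist_self_add_left]; exact hxy.2)
      have hnear' := hξδ (hww'.trans_lt (hhδ.trans_le (min_le_right _ _)))
      rw [hMξ.eq_zero w' hw'] at hnear'
      linarith [(abs_lt.1 hnear).2, (abs_lt.1 hnear').2, hle (w + (x - y))]
    have hxy' := hξ.isDiscreteSolution_translate_le hh hu hf_nonneg he.le (by positivity) hf_near
      hbdry y
    rw [add_sub_cancel] at hxy'
    linarith [mul_le_mul_of_nonneg_left (abs_le.1 (hX y)).2 he.le]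
  exact fun x y hxy ↦ abs_le.2
    ⟨by linarith [htranslate y x (by rwa [dist_comm])], htranslate x y hxy⟩

lemma exists_approx_discreteSolution (hξ : IsTorsionDomain k Ω ξ) (hf : ContVanishingOff Ω f)
    (hf_nonneg : ∀ x, 0 ≤ f x) (hfM : ∀ x, f x ≤ M) :
    ∃ u, ContVanishingOff Ω u ∧ (∀ x, u x ∈ Icc 0 (M * ξ x)) ∧
      ∀ η, 0 < η → ∃ h v, 0 < h ∧ h < η ∧ k.IsDiscreteSolution Ω f h v ∧
        ∀ x, dist (u x) (v x) ≤ η := by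
  have hM_nonneg : 0 ≤ M := (hf_nonneg 0).trans (hfM 0)
  have hpos (n : ℕ) : (0 : ℝ) < 1 / ((n : ℝ) + 1) := Nat.one_div_pos_of_nat
  choose v hv using fun n ↦
    hξ.exists_isDiscreteSolution (hpos n) hf.continuous.measurable hf_nonneg hfM
  have hvM (n : ℕ) : v n ∈ Icc 0 fun x ↦ M * ξ x :=
    ⟨hξ.nonneg_of_isDiscreteSolution (hpos n) (hv n) hf_nonneg,
      hξ.isDiscreteSolution_le (hpos n) (hv n) hM_nonneg hfM⟩
  have hzero {w : E → ℝ} (hw : w ∈ Icc 0 fun x ↦ M * ξ x) (x : E) (hx : x ∉ Ω) : w x = 0 :=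
    le_antisymm (by simpa only [hξ.contVanishingOff.eq_zero x hx, mul_zero] using hw.2 x) (hw.1 x)
  obtain ⟨u, huM, hu⟩ := isCompact_Icc.ultrafilter_le_nhds' ((hyperfilter ℕ).map v)
    (Ultrafilter.mem_map.2 (univ_mem' hvM))
  have hsmall (δ : ℝ) (hδ : 0 < δ) :
      ∀ᶠ n : ℕ in (hyperfilter ℕ : Filter ℕ), 1 / ((n : ℝ) + 1) < δ :=
    Nat.hyperfilter_le_atTop
      (tendsto_one_div_add_atTop_nhds_zero_nat.eventually_lt_const hδ)
  have hequi : IsAsymptoticallyEquicontinuous (hyperfilter ℕ : Filter ℕ) v := fun η hη ↦ by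
    obtain ⟨δ, hδ, h⟩ := hξ.exists_forall_isDiscreteSolution_dist_le hf hf_nonneg hη
    exact ⟨δ, hδ, (hsmall δ hδ).mono fun n hn ↦ h _ _ (hpos n) hn (hv n)⟩
  refine ⟨u, ⟨hequi.continuous hu, hzero huM⟩, fun x ↦ ⟨huM.1 x, huM.2 x⟩, fun η hη ↦ ?_⟩
  obtain ⟨n, hn, hnη⟩ := ((Metric.tendstoUniformlyOn_iff.1
    (hequi.tendstoUniformlyOn hu hξ.isBounded.isCompact_closure) η hη).and (hsmall η hη)).exists
  refine ⟨_, v n, hpos n, hnη, hv n, fun x ↦ ?_⟩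
  by_cases hx : x ∈ Ω
  · exact (hn x (subset_closure hx)).le
  · rw [hzero huM x hx, hzero (hvM n) x hx, dist_self]
    exact hη.le

end IsTorsionDomain

end DiscreteProblem

section Mollification

open Filter Topology Metric
open scoped ContDiff

variable {E : Type*} [NormedAddCommGroup E] [InnerProductSpace ℝ E] [FiniteDimensional ℝ E]
  [MeasurableSpace E] [BorelSpace E] {Ω : Set E} {κ κ' u : E → ℝ} {t : ℝ}

lemma IsBddMeasurable.scaledAverage (hκ : IsUnitBallKernel κ) (hu : IsBddMeasurable u) (t : ℝ) :
    IsBddMeasurable (scaledAverage κ t u) := by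
  obtain ⟨M, hM⟩ := hu.bounded
  exact ⟨(stronglyMeasurable_scaledAverage hκ hu.measurable).measurable.comp measurable_prodMk_left,
    _, abs_scaledAverage_le hκ hu.measurable hM t⟩

lemma scaledAverage_comm (hκ : IsUnitBallKernel κ) (hκ' : IsUnitBallKernel κ')
    (hu : IsBddMeasurable u) (s t : ℝ) (x : E) :
    scaledAverage κ s (scaledAverage κ' t u) x = scaledAverage κ' t (scaledAverage κ s u) x := by
  obtain ⟨M, hM⟩ := hu.bounded
  simp only [_root_.scaledAverage, ← integral_const_mul]
  rw [integral_integral_swap]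
  · simp only [add_right_comm, mul_left_comm]
  · refine ((hκ.integrable.mul_prod hκ'.integrable).mul_bdd
      (g := fun p : E × E ↦ u (x + s • p.1 + t • p.2))
      (hu.measurable.comp (by fun_prop)).aestronglyMeasurable
      (Eventually.of_forall fun p ↦ hM _)).congr (Eventually.of_forall fun p ↦ ?_)
    simp only [Function.uncurry, mul_assoc]

lemma hasCompactSupport_scaledAverage (hκ : IsUnitBallKernel κ) (hΩ : Bornology.IsBounded Ω)
    (hu : ∀ x ∉ Ω, u x = 0) (ht : 0 ≤ t) : HasCompactSupport (scaledAverage κ t u) := by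
  refine HasCompactSupport.intro (K := cthickening t Ω)
    (Metric.isCompact_of_isClosed_isBounded isClosed_cthickening hΩ.cthickening) fun x hx ↦ ?_
  rw [scaledAverage_congr hκ ht (g := fun _ ↦ 0) fun y hy ↦ hu y fun hy' ↦
    hx (mem_cthickening_of_dist_le x y t Ω hy' (by rw [dist_comm]; exact hy)),
    scaledAverage_const, mul_zero]

lemma tendsto_scaledAverage_of_tendsto_zero (hκ : IsUnitBallKernel κ) (hu : IsBddMeasurable u)
    (hu' : Continuous u) {s : ℕ → ℝ} (hs : Tendsto s atTop (𝓝 0)) (x : E) :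
    Tendsto (fun n ↦ scaledAverage κ (s n) u x) atTop (𝓝 ((∫ z, κ z) * u x)) := by
  obtain ⟨M, hM⟩ := hu.bounded
  rw [← integral_mul_const]
  refine tendsto_integral_of_dominated_convergence (fun z ↦ |κ z| * M)
    (fun n ↦ (integrable_scaledAverage hκ hu (s n) x).aestronglyMeasurable)
    (hκ.integrable.abs.mul_const M) (fun n ↦ Eventually.of_forall fun z ↦ ?_)
    (Eventually.of_forall fun z ↦ ?_)
  · rw [norm_mul]
    exact mul_le_mul_of_nonneg_left (hM _) (norm_nonneg _)
  · have hline : Tendsto (fun n ↦ x + s n • z) atTop (𝓝 x) := by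
      simpa using (hs.smul_const z).const_add x
    exact ((hu'.tendsto x).comp hline).const_mul _

end Mollification

section LinearProblem

open Filter Topology Metric
open scoped ContDiff

variable {N : ℕ} {κ u v f ξ : EuclideanSpace ℝ (Fin N) → ℝ} {Ω : Set (EuclideanSpace ℝ (Fin N))}
  {x : EuclideanSpace ℝ (Fin N)} {k : LaplaceKernel (EuclideanSpace ℝ (Fin N))} {h t M : ℝ}

lemma isUnitBallKernel_lapl (hκ : IsUnitBallKernel κ) : IsUnitBallKernel (lapl κ) where
  contDiff := ContDiff.sum fun i _ ↦ ((hκ.fderiv_apply _).fderiv_apply _).contDiff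
  tsupport_subset := by
    refine closure_minimal (fun z hz ↦ ?_) isClosed_closedBall
    by_contra hz'
    refine hz ?_
    rw [lapl_congr (notMem_tsupport_iff_eventuallyEq.1 fun h ↦ hz' (hκ.tsupport_subset h))]
    simp [lapl]

lemma lapl_scaledAverage (hκ : IsUnitBallKernel κ) (hu : IsBddMeasurable u) (ht : t ≠ 0)
    (x : EuclideanSpace ℝ (Fin N)) :
    lapl (scaledAverage κ t u) x = t⁻¹ ^ 2 * scaledAverage (lapl κ) t u x := by
  have hsecond (i : Fin N) : fderiv ℝ (fun y ↦ fderiv ℝ (scaledAverage κ t u) y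
      (EuclideanSpace.single i 1)) x (EuclideanSpace.single i 1) =
      t⁻¹ ^ 2 * scaledAverage (fun z ↦ fderiv ℝ (fun z ↦ fderiv ℝ κ z (EuclideanSpace.single i 1)) z
        (EuclideanSpace.single i 1)) t u x := by
    have hκi := hκ.fderiv_apply (EuclideanSpace.single i 1)
    simp only [fderiv_scaledAverage hκ hu ht]
    rw [fderiv_const_mul ((contDiff_scaledAverage hκi hu ht).differentiable (by simp) x),
      smul_apply, fderiv_scaledAverage hκi hu ht, smul_eq_mul]
    ring
  simp only [lapl, hsecond, ← Finset.mul_sum, scaledAverage, Finset.sum_mul]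
  rw [integral_finsetSum _ fun i _ ↦ integrable_scaledAverage
    ((hκ.fderiv_apply _).fderiv_apply _) hu t x]

lemma abs_lapl_scaledAverage_sub_le (hκ : IsUnitBallKernel κ) (hu : IsBddMeasurable u)
    (hv : IsBddMeasurable v) (ht : t ≠ 0) {η : ℝ} (huv : ∀ y, |u y - v y| ≤ η)
    (x : EuclideanSpace ℝ (Fin N)) :
    |lapl (scaledAverage κ t u) x - lapl (scaledAverage κ t v) x| ≤
      η * (t⁻¹ ^ 2 * ∫ z, |lapl κ z|) := by
  have hκ' := isUnitBallKernel_lapl hκ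
  rw [lapl_scaledAverage hκ hu ht, lapl_scaledAverage hκ hv ht, ← mul_sub,
    ← scaledAverage_sub hκ' hu hv, abs_mul, abs_of_nonneg (by positivity), mul_left_comm,
    mul_comm η]
  exact mul_le_mul_of_nonneg_left
    (abs_scaledAverage_le hκ' (hu.measurable.sub hv.measurable) huv t x) (by positivity)

lemma contDiff_two_scaledAverage (hκ : IsUnitBallKernel κ) (hu : IsBddMeasurable u) (ht : t ≠ 0) :
    ContDiff ℝ 2 (scaledAverage κ t u) :=
  contDiff_infty.1 (contDiff_scaledAverage hκ hu ht) 2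

namespace LaplaceKernel

lemma IsDiscreteSolution.potential_neg_lapl_eq (hv : k.IsDiscreteSolution Ω f h v)
    (hΩ : Bornology.IsBounded Ω) (hf : IsBddMeasurable f) (hh : 0 ≤ h) (ht : 0 < t)
    (hx : closedBall x t ⊆ innerRegion Ω h) :
    k.potential h (fun y ↦ -lapl (scaledAverage k.ρ t v) y) x =
      k.strength * h ^ 2 * scaledAverage k.ρ t f x := by
  have hρ := k.isUnitBallKernel_ρ
  have hv_bdd := hv.isBddMeasurable
  have hv_zero (y) (hy : y ∉ Ω) : v y = 0 :=
    hv.eq_zero fun hy' ↦ hy (hy' (mem_closedBall_self hh))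
  have hsmooth := k.eq_scaledAverage_add_potential (contDiff_two_scaledAverage hρ hv_bdd ht.ne')
    (hasCompactSupport_scaledAverage hρ hΩ hv_zero ht.le) h x
  have hscheme : scaledAverage k.ρ t (scaledAverage k.ρ h v) x =
      scaledAverage k.ρ t (fun y ↦ v y - k.strength * h ^ 2 * f y) x :=
    scaledAverage_congr hρ ht.le fun y hy ↦ hv.scaledAverage_eq (hx hy)
  rw [scaledAverage_comm hρ hρ hv_bdd, scaledAverage_sub hρ hv_bdd (hf.const_mul _),
    scaledAverage_const_mul] at hscheme
  linarith

lemma IsDiscreteSolution.abs_neg_lapl_sub_le (hv : k.IsDiscreteSolution Ω f h v)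
    (hΩ : Bornology.IsBounded Ω) (hf : IsBddMeasurable f) (hu : IsBddMeasurable u) (hh : 0 < h)
    (ht : 0 < t) (hx : closedBall x t ⊆ innerRegion Ω h) {η ε : ℝ} (huv : ∀ y, dist (u y) (v y) ≤ η)
    (hosc : ∀ y ∈ closedBall x h,
      dist (lapl (scaledAverage k.ρ t u) y) (lapl (scaledAverage k.ρ t u) x) ≤ ε) :
    |-lapl (scaledAverage k.ρ t u) x - scaledAverage k.ρ t f x| ≤
      η * (t⁻¹ ^ 2 * ∫ z, |lapl k.ρ z|) + ε := by
  have hρ := k.isUnitBallKernel_ρ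
  have hstrength := k.strength_pos
  have hv_bdd := hv.isBddMeasurable
  have hlapl_bdd : IsBddMeasurable fun y ↦ -lapl (scaledAverage k.ρ t v) y := by
    simp only [lapl_scaledAverage hρ hv_bdd ht.ne', ← neg_mul]
    exact (hv_bdd.scaledAverage (isUnitBallKernel_lapl hρ) t).const_mul _
  have hclose := k.abs_potential_sub_le (.const (-lapl (scaledAverage k.ρ t u) x)) hlapl_bdd hh.le
    (x := x) (η := η * (t⁻¹ ^ 2 * ∫ z, |lapl k.ρ z|) + ε) fun y hy ↦ by
      rw [neg_sub_neg]
      refine (abs_sub_le _ (lapl (scaledAverage k.ρ t u) y) _).trans (add_le_add ?_ (hosc y hy))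
      rw [abs_sub_comm]
      exact abs_lapl_scaledAverage_sub_le hρ hu hv_bdd ht.ne' huv y
  rw [hv.potential_neg_lapl_eq hΩ hf hh.le ht hx, k.potential_const, ← mul_sub, abs_mul,
    abs_of_pos (by positivity)] at hclose
  exact le_of_mul_le_mul_left hclose (by positivity)

end LaplaceKernel

lemma mem_innerRegion_of_dist_le {X : Type*} [PseudoMetricSpace X] {Ω : Set X} {x y : X} {r s : ℝ}
    (hx : x ∈ innerRegion Ω r) (hy : dist y x + s ≤ r) : y ∈ innerRegion Ω s :=
  (closedBall_subset_closedBall' (by rwa [add_comm])).trans hx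

lemma neg_lapl_scaledAverage_eq (hΩ : Bornology.IsBounded Ω) (hf : IsBddMeasurable f)
    (hu : IsBddMeasurable u) (happrox : ∀ η, 0 < η → ∃ h v, 0 < h ∧ h < η ∧
      k.IsDiscreteSolution Ω f h v ∧ ∀ x, dist (u x) (v x) ≤ η)
    (ht : 0 < t) (hx : x ∈ innerRegion Ω (2 * t)) :
    -lapl (scaledAverage k.ρ t u) x = scaledAverage k.ρ t f x := by
  have hcont := (continuous_lapl
    (contDiff_two_scaledAverage k.isUnitBallKernel_ρ hu ht.ne')).continuousAt (x := x)
  refine sub_eq_zero.1 <| abs_nonpos_iff.1 <| le_of_forall_pos_le_add_mul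
    (c := t⁻¹ ^ 2 * (∫ z, |lapl k.ρ z|) + 1) fun ε hε ↦ ?_
  obtain ⟨r, hr, hosc⟩ := nhds_basis_closedBall.mem_iff.1 (Metric.tendsto_nhds.1 hcont ε hε)
  obtain ⟨h, v, hh, hh_lt, hv, huv⟩ := happrox (min ε (min r t)) (by positivity)
  rw [lt_min_iff, lt_min_iff] at hh_lt
  have hx' : closedBall x t ⊆ innerRegion Ω h := fun y hy ↦
    mem_innerRegion_of_dist_le hx (by linarith [mem_closedBall.1 hy])
  have hle := hv.abs_neg_lapl_sub_le hΩ hf hu hh ht hx'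
    (fun y ↦ (huv y).trans (min_le_left _ _))
    fun y hy ↦ (hosc (closedBall_subset_closedBall hh_lt.2.1.le hy)).le
  linarith

lemma IsTorsionDomain.exists_isMeanValueSolution (hξ : IsTorsionDomain k Ω ξ)
    (hf : ContVanishingOff Ω f) (hf_nonneg : ∀ x, 0 ≤ f x) (hfM : ∀ x, f x ≤ M) :
    ∃ u, ContVanishingOff Ω u ∧ (∀ x, u x ∈ Icc 0 (M * ξ x)) ∧ k.IsMeanValueSolution Ω u f := by
  have hρ := k.isUnitBallKernel_ρ
  obtain ⟨u, hu, huM, happrox⟩ := hξ.exists_approx_discreteSolution hf hf_nonneg hfM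
  have hf_bdd := hξ.isBddMeasurable hf
  have hu_bdd := hξ.isBddMeasurable hu
  refine ⟨u, hu, huM, fun x T hT hball ↦ ?_⟩
  obtain ⟨r, hr, hrΩ⟩ := (isCompact_closedBall x T).exists_cthickening_subset_open hξ.isOpen hball
  let s (n : ℕ) : ℝ := r / 2 / (n + 1 : ℕ)
  have hs_pos (n : ℕ) : 0 < s n := by positivity
  have hs : Tendsto s atTop (𝓝 0) :=
    (tendsto_const_div_atTop_nhds_zero_nat _).comp (tendsto_add_atTop_nat 1)
  have hinner (n : ℕ) (y) (hy : y ∈ closedBall x T) : y ∈ innerRegion Ω (2 * s n) := by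
    have hsr : s n ≤ r / 2 := div_le_self (by positivity) (by simp)
    exact ((closedBall_subset_closedBall (by linarith)).trans
      (closedBall_subset_cthickening hy r)).trans hrΩ
  have hmoll {g : EuclideanSpace ℝ (Fin N) → ℝ} (hg : ContVanishingOff Ω g) (y) :
      Tendsto (fun n ↦ scaledAverage k.ρ (s n) g y) atTop (𝓝 (g y)) := by
    simpa only [k.integral_ρ, one_mul] using tendsto_scaledAverage_of_tendsto_zero hρ
      (hξ.isBddMeasurable hg) hg.continuous hs y
  have hmoll_meas {g : EuclideanSpace ℝ (Fin N) → ℝ} (hg : IsBddMeasurable g) (n : ℕ) :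
      Measurable (scaledAverage k.ρ (s n) g) := (hg.scaledAverage hρ (s n)).measurable
  obtain ⟨Mu, hMu⟩ := hu_bdd.bounded
  obtain ⟨Mf, hMf⟩ := hf_bdd.bounded
  have hmean (n : ℕ) : scaledAverage k.ρ (s n) u x =
      scaledAverage k.ρ T (scaledAverage k.ρ (s n) u) x +
        k.potential T (scaledAverage k.ρ (s n) f) x := by
    rw [← k.potential_congr hT.le fun y hy ↦ neg_lapl_scaledAverage_eq hξ.isBounded hf_bdd hu_bdd
      happrox (hs_pos n) (hinner n y hy)]
    exact k.eq_scaledAverage_add_potential (contDiff_two_scaledAverage hρ hu_bdd (hs_pos n).ne')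
      (hasCompactSupport_scaledAverage hρ hξ.isBounded hu.eq_zero (hs_pos n).le) T x
  refine tendsto_nhds_unique (hmoll hu x) ?_
  simp only [hmean]
  exact (tendsto_scaledAverage hρ (hmoll_meas hu_bdd)
    (fun n ↦ abs_scaledAverage_le hρ hu_bdd.measurable hMu (s n)) (hmoll hu) T x).add
    (k.tendsto_potential (hmoll_meas hf_bdd)
      (fun n ↦ abs_scaledAverage_le hρ hf_bdd.measurable hMf (s n)) (hmoll hf) T x)

end LinearProblem

section Reaction

/-- `F` is a sublinear reaction term on `[0, a]` with exponent `p < 1`: a continuous monotone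
function with `F 0 = 0 < F a` which, on `(0, a]`, grows at most like the power `s ↦ s ^ p`. -/
structure IsSublinearReaction (F : ℝ → ℝ) (a p : ℝ) : Prop where
  a_pos : 0 < a
  p_nonneg : 0 ≤ p
  p_lt_one : p < 1
  continuous : Continuous F
  monotone : Monotone F
  map_zero : F 0 = 0
  map_pos : 0 < F a
  scaling : ∀ ⦃s r⦄, 0 < s → s ≤ r → r ≤ a → F r ≤ (r / s) ^ p * F s

lemma IsSublinearReaction.nonneg {F : ℝ → ℝ} {a p s : ℝ} (hF : IsSublinearReaction F a p)
    (hs : 0 ≤ s) : 0 ≤ F s :=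
  hF.map_zero ▸ hF.monotone hs

lemma IsSublinearReaction.exists_mul_le {F : ℝ → ℝ} {a p l t : ℝ}
    (hF : IsSublinearReaction F a p) (hl : 0 < l) (ht : 0 < t) :
    ∃ ε, 0 < ε ∧ ε ≤ a ∧ ∀ s ∈ Icc 0 ε, l * s ≤ t * F s := by
  have ha := hF.a_pos
  have hFa := hF.map_pos
  have hp : 0 < 1 - p := sub_pos.2 hF.p_lt_one
  set c := t * F a / (l * a)
  have hc : 0 < c := by positivity
  refine ⟨a * min 1 (c ^ (1 - p)⁻¹), by positivity,
    mul_le_of_le_one_right ha.le (min_le_left _ _), fun s hs ↦ ?_⟩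
  rcases hs.1.eq_or_lt with rfl | hs0
  · simp [hF.map_zero]
  have hsε : s / a ≤ min 1 (c ^ (1 - p)⁻¹) := (div_le_iff₀' ha).2 hs.2
  have hsa : s ≤ a := (div_le_one ha).1 (hsε.trans (min_le_left _ _))
  have hsmall : (s / a) ^ (1 - p) ≤ c :=
    (le_rpow_inv_iff_of_pos (by positivity) hc.le hp).1 (hsε.trans (min_le_right _ _))
  have hgrowth : (s / a) ^ p * F a ≤ F s := by
    have h := hF.scaling hs0 hsa le_rfl
    rwa [← inv_div, inv_rpow (by positivity), inv_mul_eq_div, le_div_iff₀' (by positivity)] at h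
  calc l * s = l * a * ((s / a) ^ (1 - p) * (s / a) ^ p) := by
        rw [← rpow_add (by positivity), sub_add_cancel, rpow_one]
        field_simp
    _ ≤ l * a * (c * (s / a) ^ p) := by gcongr
    _ = t * ((s / a) ^ p * F a) := by
        simp only [c]
        field_simp
    _ ≤ t * F s := by gcongr

lemma le_rpow_div_mul_of_mul_deriv_le {f f' : ℝ → ℝ} {p s r : ℝ} (hs : 0 < s) (hsr : s ≤ r)
    (hf : ∀ x ∈ Icc s r, HasDerivAt f (f' x) x) (hf' : ∀ x ∈ Icc s r, x * f' x ≤ p * f x) :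
    f r ≤ (r / s) ^ p * f s := by
  have hr := hs.trans_le hsr
  have hderiv (x) (hx : x ∈ Icc s r) :
      HasDerivAt (fun x ↦ f x * x ^ (-p)) (x ^ (-p - 1) * (x * f' x - p * f x)) x := by
    have hx0 := hs.trans_le hx.1
    refine ((hf x hx).fun_mul (hasDerivAt_rpow_const (.inl hx0.ne'))).congr_deriv ?_
    rw [rpow_sub_one hx0.ne']
    field_simp
    ring
  have hanti : AntitoneOn (fun x ↦ f x * x ^ (-p)) (Icc s r) := by
    refine antitoneOn_of_deriv_nonpos (convex_Icc s r)
      (fun x hx ↦ (hderiv x hx).continuousAt.continuousWithinAt)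
      (fun x hx ↦ (hderiv x (interior_subset hx)).differentiableAt.differentiableWithinAt)
      fun x hx ↦ ?_
    have hx := interior_subset hx
    rw [(hderiv x hx).deriv]
    exact mul_nonpos_of_nonneg_of_nonpos (rpow_nonneg (hs.le.trans hx.1) _)
      (sub_nonpos.2 (hf' x hx))
  have h := hanti (left_mem_Icc.2 hsr) (right_mem_Icc.2 hsr) hsr
  simp only [rpow_neg hr.le, rpow_neg hs.le, ← div_eq_mul_inv] at h
  rw [div_le_iff₀ (by positivity)] at h
  rw [div_rpow hr.le hs.le]
  exact h.trans_eq (by ring)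

/-- The reaction term `s ↦ μ s ^ q + π sin³ s` on `[0, π / 2]`, extended to a monotone continuous
function on `ℝ`. -/
def truncatedReaction (μ q s : ℝ) : ℝ :=
  μ * max s 0 ^ q + π * sin (min (max s 0) (π / 2)) ^ 3

variable {μ q s a X : ℝ}

lemma truncatedReaction_of_mem_Icc (hs : s ∈ Icc 0 (π / 2)) :
    truncatedReaction μ q s = μ * s ^ q + π * sin s ^ 3 := by
  rw [truncatedReaction, max_eq_left hs.1, min_eq_left hs.2]

lemma truncatedReaction_zero (hq : q ≠ 0) : truncatedReaction μ q 0 = 0 := by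
  simp [truncatedReaction_of_mem_Icc (left_mem_Icc.2 pi_div_two_pos.le), zero_rpow hq]

lemma continuous_truncatedReaction (hq : 0 ≤ q) : Continuous (truncatedReaction μ q) :=
  (continuous_const.mul ((continuous_id.max continuous_const).rpow_const fun _ ↦ .inr hq)).add
    (by fun_prop)

lemma monotone_truncatedReaction (hμ : 0 ≤ μ) (hq : 0 ≤ q) : Monotone (truncatedReaction μ q) := by
  intro s r hsr
  have hmax : max s 0 ≤ max r 0 := max_le_max_right 0 hsr
  have hmin : min (max s 0) (π / 2) ≤ min (max r 0) (π / 2) := min_le_min_right _ hmax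
  have hmin0 : 0 ≤ min (max s 0) (π / 2) := by positivity
  have hsin0 :=
    sin_nonneg_of_nonneg_of_le_pi hmin0 ((min_le_right _ _).trans (by linarith [pi_pos]))
  have hsin := sin_le_sin_of_le_of_le_pi_div_two (by linarith [pi_pos]) (min_le_right _ _) hmin
  unfold truncatedReaction
  gcongr

lemma contDiffAt_truncatedReaction (hs : s ∈ Ioo 0 (π / 2)) :
    ContDiffAt ℝ 1 (truncatedReaction μ q) s := by
  have h : ContDiffAt ℝ 1 (fun s : ℝ ↦ μ * s ^ q + π * sin s ^ 3) s :=
    (contDiffAt_const.mul (contDiffAt_rpow_const_of_ne hs.1.ne')).add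
      (contDiffAt_const.mul (contDiff_sin.contDiffAt.pow 3))
  refine h.congr_of_eventuallyEq ?_
  filter_upwards [Ioo_mem_nhds hs.1 hs.2] with r hr
  exact truncatedReaction_of_mem_Icc (Ioo_subset_Icc_self hr)

lemma mul_deriv_reaction_le (hq : 0 ≤ q) (hs : s ∈ Ioc 0 (π / 2))
    (hsmall : 6 * π * s ^ (3 - q) ≤ (1 - q) * μ) :
    s * (μ * (q * s ^ (q - 1)) + π * (3 * sin s ^ 2 * cos s)) ≤
      (1 + q) / 2 * (μ * s ^ q + π * sin s ^ 3) := by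
  obtain ⟨hs0, hsπ⟩ := hs
  have hsin0 : 0 ≤ sin s := sin_nonneg_of_nonneg_of_le_pi hs0.le (by linarith)
  have hpow : s * s ^ (q - 1) = s ^ q := by
    rw [rpow_sub_one hs0.ne']
    field_simp
  have hcube : s ^ q * s ^ (3 - q) = s ^ 3 := by
    rw [← rpow_add hs0]
    norm_num
  have hsin : sin s ^ 2 * cos s ≤ s ^ 2 * 1 := by
    gcongr
    exacts [cos_nonneg_of_neg_pi_div_two_le_of_le (by linarith) hsπ, sin_le hs0.le, cos_le_one s]
  calc s * (μ * (q * s ^ (q - 1)) + π * (3 * sin s ^ 2 * cos s))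
      = q * (μ * (s * s ^ (q - 1))) + 3 * π * s * (sin s ^ 2 * cos s) := by ring
    _ ≤ q * (μ * s ^ q) + 3 * π * s * (s ^ 2 * 1) := by
        rw [hpow]
        gcongr
    _ = q * (μ * s ^ q) + s ^ q * (6 * π * s ^ (3 - q)) / 2 := by
        linear_combination (-3) * π * hcube
    _ ≤ q * (μ * s ^ q) + s ^ q * ((1 - q) * μ) / 2 := by gcongr
    _ = (1 + q) / 2 * (μ * s ^ q) := by ring
    _ ≤ (1 + q) / 2 * (μ * s ^ q + π * sin s ^ 3) := by
        gcongr
        exact le_add_of_nonneg_right (by positivity)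

lemma isSublinearReaction_truncatedReaction (hq0 : 0 < q) (hq1 : q < 1) (hμ : 0 < μ)
    (ha : a ∈ Ioc 0 (π / 2)) (hsmall : 6 * π * a ^ (3 - q) ≤ (1 - q) * μ) :
    IsSublinearReaction (truncatedReaction μ q) a ((1 + q) / 2) where
  a_pos := ha.1
  p_nonneg := by positivity
  p_lt_one := by linarith
  continuous := continuous_truncatedReaction hq0.le
  monotone := monotone_truncatedReaction hμ.le hq0.le
  map_zero := truncatedReaction_zero hq0.ne'
  map_pos := by
    have ha0 := ha.1
    have hsin := sin_nonneg_of_nonneg_of_le_pi ha.1.le (by linarith [ha.2])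
    rw [truncatedReaction_of_mem_Icc (Ioc_subset_Icc_self ha)]
    positivity
  scaling s r hs hsr hra := by
    have hra' := hra.trans ha.2
    rw [truncatedReaction_of_mem_Icc ⟨hs.le.trans hsr, hra'⟩,
      truncatedReaction_of_mem_Icc ⟨hs.le, hsr.trans hra'⟩]
    refine le_rpow_div_mul_of_mul_deriv_le (f := fun x ↦ μ * x ^ q + π * sin x ^ 3) hs hsr
      (fun x hx ↦ ((hasDerivAt_rpow_const (.inl (hs.trans_le hx.1).ne')).const_mul μ).add
        (((hasDerivAt_sin x).pow 3).const_mul π)) fun x hx ↦ ?_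
    have hx0 := hs.trans_le hx.1
    refine mul_deriv_reaction_le hq0.le ⟨hx0, hx.2.trans hra'⟩ (le_trans ?_ hsmall)
    have hxa := hx.2.trans hra
    have hexp : 0 ≤ 3 - q := by linarith
    gcongr

lemma mul_truncatedReaction_le (hq0 : 0 ≤ q) (hq1 : q < 1) (hX : 0 ≤ X) (ha : a ∈ Ioc 0 (π / 2))
    (hμ : (1 - q) * μ = 6 * π * a ^ (3 - q)) (haX : 7 * π * X * a ^ 2 ≤ 1 - q) :
    X * truncatedReaction μ q a ≤ a := by
  obtain ⟨ha0, haπ⟩ := ha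
  have hq : 0 < 1 - q := sub_pos.2 hq1
  have hcube : a ^ (3 - q) * a ^ q = a ^ 3 := by
    rw [← rpow_add ha0]
    norm_num
  have hsin0 : 0 ≤ sin a := sin_nonneg_of_nonneg_of_le_pi ha0.le (by linarith)
  have hsin : sin a ≤ a := sin_le ha0.le
  rw [truncatedReaction_of_mem_Icc ⟨ha0.le, haπ⟩]
  refine le_of_mul_le_mul_left ?_ hq
  calc (1 - q) * (X * (μ * a ^ q + π * sin a ^ 3))
      = X * (6 * π * (a ^ (3 - q) * a ^ q) + (1 - q) * (π * sin a ^ 3)) := by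
        linear_combination X * a ^ q * hμ
    _ ≤ X * (6 * π * a ^ 3 + 1 * (π * a ^ 3)) := by
        rw [hcube]
        gcongr
        linarith
    _ = 7 * π * X * a ^ 2 * a := by ring
    _ ≤ (1 - q) * a := by gcongr

lemma exists_isSublinearReaction_truncatedReaction (hq0 : 0 < q) (hq1 : q < 1) (hX : 0 < X) :
    ∃ μ₀ : ℝ, 0 < μ₀ ∧ ∀ μ, 0 < μ → μ < μ₀ → ∃ a p, a < π / 2 ∧
      IsSublinearReaction (truncatedReaction μ q) a p ∧ X * truncatedReaction μ q a ≤ a := by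
  have hq : 0 < 1 - q := sub_pos.2 hq1
  have hq3 : 0 < 3 - q := by linarith
  set a₀ := min 1 √((1 - q) / (7 * π * X))
  have ha₀ : 0 < a₀ := by positivity
  refine ⟨6 * π * a₀ ^ (3 - q) / (1 - q), by positivity, fun μ hμ hμ₀ ↦ ?_⟩
  -- The largest `a` for which the scaling inequality holds on `(0, a]`.
  set a := ((1 - q) * μ / (6 * π)) ^ (3 - q)⁻¹
  have ha0 : 0 < a := by positivity
  have ha_eq : (1 - q) * μ = 6 * π * a ^ (3 - q) := by
    rw [rpow_inv_rpow (by positivity) hq3.ne']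
    field_simp
  have ha_lt : a < a₀ := by
    rw [lt_div_iff₀' hq, ha_eq] at hμ₀
    exact (rpow_lt_rpow_iff ha0.le ha₀.le hq3).1 (lt_of_mul_lt_mul_left hμ₀ (by positivity))
  have haπ : a < π / 2 := by linarith [ha_lt.trans_le (min_le_left _ _), pi_gt_three]
  have haX : 7 * π * X * a ^ 2 ≤ 1 - q :=
    (le_div_iff₀' (by positivity)).1
      ((le_sqrt' ha0).1 (ha_lt.le.trans (min_le_right _ _)))
  exact ⟨a, _, haπ, isSublinearReaction_truncatedReaction hq0 hq1 hμ ⟨ha0, haπ.le⟩ ha_eq.ge,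
    mul_truncatedReaction_le hq0.le hq1 hX.le ⟨ha0, haπ.le⟩ ha_eq haX⟩

end Reaction

section SemilinearProblem

open Filter Topology

variable {E : Type*} [NormedAddCommGroup E] [InnerProductSpace ℝ E] [FiniteDimensional ℝ E]
  [MeasurableSpace E] [BorelSpace E] {k : LaplaceKernel E} {Ω : Set E} {ξ u b : E → ℝ}
  {G : ℝ → ℝ} {a : ℝ}

lemma LaplaceKernel.isMeanValueSolution_of_tendsto {v f : ℕ → E → ℝ} {g : E → ℝ} {A B : ℝ}
    (h : ∀ n, k.IsMeanValueSolution Ω (v n) (f n))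
    (hv : ∀ n, Measurable (v n)) (hvA : ∀ n x, |v n x| ≤ A)
    (hf : ∀ n, Measurable (f n)) (hfB : ∀ n x, |f n x| ≤ B)
    (hvu : ∀ x, Tendsto (fun n ↦ v n x) atTop (𝓝 (u x)))
    (hfg : ∀ x, Tendsto (fun n ↦ f n x) atTop (𝓝 (g x))) :
    k.IsMeanValueSolution Ω u g := fun x T hT hball ↦
  tendsto_nhds_unique ((hvu x).congr fun n ↦ h n x T hT hball)
    ((tendsto_scaledAverage k.isUnitBallKernel_ρ hv hvA hvu T x).add
      (k.tendsto_potential hf hfB hfg T x))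

lemma LaplaceKernel.IsMeanValueSolution.contVanishingOff {f B : E → ℝ}
    (h : k.IsMeanValueSolution Ω u f) (hΩ : IsOpen Ω) (hu : IsBddMeasurable u)
    (hf : IsBddMeasurable f) (hB : ContVanishingOff Ω B) (huB : ∀ x, u x ∈ Icc 0 (B x)) :
    ContVanishingOff Ω u := by
  have hzero (x) (hx : x ∉ Ω) : u x = 0 :=
    le_antisymm ((huB x).2.trans_eq (hB.eq_zero x hx)) (huB x).1
  refine ⟨continuous_iff_continuousAt.2 fun x ↦ ?_, hzero⟩
  by_cases hx : x ∈ Ω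
  · exact (h.contDiffOn_one hΩ hu hf).continuousOn.continuousAt (hΩ.mem_nhds hx)
  · have hBx : Tendsto B (𝓝 x) (𝓝 0) := hB.eq_zero x hx ▸ hB.continuous.tendsto x
    rw [ContinuousAt, hzero x hx]
    exact tendsto_of_tendsto_of_tendsto_of_le_of_le tendsto_const_nhds hBx
      (fun y ↦ (huB y).1) fun y ↦ (huB y).2

/-- `b` is a subsolution, with values in `[0, a]`, of the Dirichlet problem `-Δu = G(u)` in `Ω`. -/
structure IsSubsolution (k : LaplaceKernel E) (Ω : Set E) (G : ℝ → ℝ) (a : ℝ) (b : E → ℝ) :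
    Prop where
  contVanishingOff : ContVanishingOff Ω b
  mem_Icc : ∀ x, b x ∈ Icc 0 a
  exists_le : ∃ f, IsBddMeasurable f ∧ k.IsMeanValueSolution Ω b f ∧ ∀ x ∈ Ω, f x ≤ G (b x)

/-- `u` is the least solution with values in `[b, a]` of the Dirichlet problem `-Δu = G(u)` in `Ω`.
It even lies below the supersolutions `w ≥ b` of the problem truncated at height `a`. -/
structure IsMinimalSolution (k : LaplaceKernel E) (Ω : Set E) (G : ℝ → ℝ) (a : ℝ)
    (b u : E → ℝ) : Prop where
  contVanishingOff : ContVanishingOff Ω u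
  mem_Icc : ∀ x, u x ∈ Icc (b x) a
  isMeanValueSolution : k.IsMeanValueSolution Ω u fun x ↦ G (u x)
  le_of_supersolution : ∀ ⦃w g⦄, ContVanishingOff Ω w → IsBddMeasurable g →
    k.IsMeanValueSolution Ω w g → (∀ x, b x ≤ w x) → (∀ x ∈ Ω, G (min (w x) a) ≤ g x) →
    ∀ x, u x ≤ w x

section MonotoneScheme

/-- `S` maps nonnegative data `f` to a solution of the Dirichlet problem `-Δu = f` in `Ω`. -/
def IsPoissonSolver (k : LaplaceKernel E) (Ω : Set E) (S : (E → ℝ) → E → ℝ) : Prop :=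
  ∀ ⦃f⦄, ContVanishingOff Ω f → (∀ x, 0 ≤ f x) →
    ContVanishingOff Ω (S f) ∧ k.IsMeanValueSolution Ω (S f) f

/-- The functions vanishing off `Ω` that lie between `b` and the barrier `c * ξ`. -/
def barrierInterval (Ω : Set E) (b : E → ℝ) (c : ℝ) (ξ : E → ℝ) : Set (E → ℝ) :=
  {v | ContVanishingOff Ω v ∧ v ∈ Icc b fun x ↦ c * ξ x}

variable {S : (E → ℝ) → E → ℝ} {v w : E → ℝ}

lemma IsSubsolution.mem_Icc_of_mem (hb : IsSubsolution k Ω G a b) (hξa : ∀ x, G a * ξ x ≤ a)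
    (hv : v ∈ barrierInterval Ω b (G a) ξ) (x : E) : v x ∈ Icc 0 a :=
  ⟨(hb.mem_Icc x).1.trans (hv.2.1 x), (hv.2.2 x).trans (hξa x)⟩

lemma IsSubsolution.self_mem (hξ : IsTorsionDomain k Ω ξ) (hb : IsSubsolution k Ω G a b)
    (hG : Monotone G) : b ∈ barrierInterval Ω b (G a) ξ := by
  obtain ⟨f, hf, hbf, hfG⟩ := hb.exists_le
  refine ⟨hb.contVanishingOff, le_rfl, hξ.le_of_isMeanValueSolution hb.contVanishingOff
    (hξ.contVanishingOff.const_mul _) hf (.const (G a * 1)) hbf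
    (hξ.isMeanValueSolution.const_mul _) fun x hx ↦ ?_⟩
  rw [mul_one]
  exact (hfG x hx).trans (hG (hb.mem_Icc x).2)

lemma IsPoissonSolver.apply_comp (hS : IsPoissonSolver k Ω S) (hb : IsSubsolution k Ω G a b)
    (hG : Continuous G) (hG_mono : Monotone G) (hG0 : G 0 = 0) (hξa : ∀ x, G a * ξ x ≤ a)
    (hv : v ∈ barrierInterval Ω b (G a) ξ) :
    ContVanishingOff Ω (S fun x ↦ G (v x)) ∧
      k.IsMeanValueSolution Ω (S fun x ↦ G (v x)) fun x ↦ G (v x) :=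
  hS (hv.1.comp hG hG0) fun x ↦ hG0 ▸ hG_mono (hb.mem_Icc_of_mem hξa hv x).1

lemma IsPoissonSolver.mapsTo (hξ : IsTorsionDomain k Ω ξ) (hS : IsPoissonSolver k Ω S)
    (hb : IsSubsolution k Ω G a b) (hG : Continuous G) (hG_mono : Monotone G) (hG0 : G 0 = 0)
    (hξa : ∀ x, G a * ξ x ≤ a) :
    MapsTo (fun v ↦ S fun x ↦ G (v x)) (barrierInterval Ω b (G a) ξ)
      (barrierInterval Ω b (G a) ξ) := by
  intro v hv
  obtain ⟨hSv, hSv_sol⟩ := hS.apply_comp hb hG hG_mono hG0 hξa hv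
  obtain ⟨f, hf, hbf, hfG⟩ := hb.exists_le
  have hGv := hξ.isBddMeasurable (hv.1.comp hG hG0)
  refine ⟨hSv, hξ.le_of_isMeanValueSolution hb.contVanishingOff hSv hf hGv hbf hSv_sol
    fun x hx ↦ (hfG x hx).trans (hG_mono (hv.2.1 x)),
    hξ.le_of_isMeanValueSolution hSv (hξ.contVanishingOff.const_mul _) hGv (.const (G a * 1))
      hSv_sol (hξ.isMeanValueSolution.const_mul _) fun x _ ↦ ?_⟩
  rw [mul_one]
  exact hG_mono (hb.mem_Icc_of_mem hξa hv x).2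

lemma IsPoissonSolver.monotoneOn (hξ : IsTorsionDomain k Ω ξ) (hS : IsPoissonSolver k Ω S)
    (hb : IsSubsolution k Ω G a b) (hG : Continuous G) (hG_mono : Monotone G) (hG0 : G 0 = 0)
    (hξa : ∀ x, G a * ξ x ≤ a) :
    MonotoneOn (fun v ↦ S fun x ↦ G (v x)) (barrierInterval Ω b (G a) ξ) := by
  intro v hv w hw hvw
  obtain ⟨hSv, hSv_sol⟩ := hS.apply_comp hb hG hG_mono hG0 hξa hv
  obtain ⟨hSw, hSw_sol⟩ := hS.apply_comp hb hG hG_mono hG0 hξa hw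
  exact hξ.le_of_isMeanValueSolution hSv hSw (hξ.isBddMeasurable (hv.1.comp hG hG0))
    (hξ.isBddMeasurable (hw.1.comp hG hG0)) hSv_sol hSw_sol fun x _ ↦ hG_mono (hvw x)

lemma IsPoissonSolver.iterate_le {g : E → ℝ} (hξ : IsTorsionDomain k Ω ξ)
    (hS : IsPoissonSolver k Ω S) (hb : IsSubsolution k Ω G a b) (hG : Continuous G)
    (hG_mono : Monotone G) (hG0 : G 0 = 0) (hξa : ∀ x, G a * ξ x ≤ a)
    (hw : ContVanishingOff Ω w) (hg : IsBddMeasurable g) (hwg : k.IsMeanValueSolution Ω w g)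
    (hbw : ∀ x, b x ≤ w x) (hGg : ∀ x ∈ Ω, G (min (w x) a) ≤ g x) (n : ℕ) (x : E) :
    (fun v ↦ S fun x ↦ G (v x))^[n] b x ≤ w x := by
  induction n generalizing x with
  | zero => exact hbw x
  | succ n ih =>
    have hmem := (hS.mapsTo hξ hb hG hG_mono hG0 hξa).iterate n (hb.self_mem hξ hG_mono)
    obtain ⟨hSv, hSv_sol⟩ := hS.apply_comp hb hG hG_mono hG0 hξa hmem
    rw [Function.iterate_succ_apply']
    exact hξ.le_of_isMeanValueSolution hSv hw (hξ.isBddMeasurable (hmem.1.comp hG hG0)) hg hSv_sol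
      hwg (fun y hy ↦ (hG_mono (le_min (ih y) (hb.mem_Icc_of_mem hξa hmem y).2)).trans (hGg y hy)) x

lemma IsPoissonSolver.exists_isMinimalSolution (hξ : IsTorsionDomain k Ω ξ)
    (hS : IsPoissonSolver k Ω S) (hb : IsSubsolution k Ω G a b) (hG : Continuous G)
    (hG_mono : Monotone G) (hG0 : G 0 = 0) (hξa : ∀ x, G a * ξ x ≤ a) :
    ∃ u, IsMinimalSolution k Ω G a b u := by
  have hmaps := hS.mapsTo hξ hb hG hG_mono hG0 hξa
  have hb_mem := hb.self_mem hξ hG_mono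
  set T : (E → ℝ) → E → ℝ := fun v ↦ S fun x ↦ G (v x)
  obtain ⟨u, hu⟩ := exists_tendsto_iterate_of_monotoneOn hb_mem (fun v hv ↦ hv.2) hmaps
    (hS.monotoneOn hξ hb hG hG_mono hG0 hξa)
  rw [tendsto_pi_nhds] at hu
  have hmem (n : ℕ) : T^[n] b ∈ barrierInterval Ω b (G a) ξ := hmaps.iterate n hb_mem
  have hIcc (n : ℕ) (x : E) : T^[n] b x ∈ Icc 0 a := hb.mem_Icc_of_mem hξa (hmem n) x
  have hmeas (n : ℕ) : Measurable (T^[n] b) := (hmem n).1.continuous.measurable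
  have habs (n : ℕ) (x : E) : |T^[n] b x| ≤ a := (abs_of_nonneg (hIcc n x).1).trans_le (hIcc n x).2
  have hGmeas (n : ℕ) : Measurable fun x ↦ G (T^[n] b x) := hG.measurable.comp (hmeas n)
  have hGabs (n : ℕ) (x : E) : |G (T^[n] b x)| ≤ G a :=
    (abs_of_nonneg (hG0 ▸ hG_mono (hIcc n x).1)).trans_le (hG_mono (hIcc n x).2)
  have hGu (x : E) : Tendsto (fun n ↦ G (T^[n] b x)) atTop (𝓝 (G (u x))) :=
    (hG.tendsto _).comp (hu x)
  have hstep (n : ℕ) : k.IsMeanValueSolution Ω (T^[n + 1] b) fun x ↦ G (T^[n] b x) := by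
    rw [Function.iterate_succ_apply']
    exact (hS.apply_comp hb hG hG_mono hG0 hξa (hmem n)).2
  have hu_sol : k.IsMeanValueSolution Ω u fun x ↦ G (u x) :=
    k.isMeanValueSolution_of_tendsto hstep (fun n ↦ hmeas (n + 1)) (fun n ↦ habs (n + 1)) hGmeas
      hGabs (fun x ↦ (tendsto_add_atTop_iff_nat 1).2 (hu x)) hGu
  have hu_le (x : E) : u x ≤ G a * ξ x := le_of_tendsto' (hu x) fun n ↦ (hmem n).2.2 x
  refine ⟨u, hu_sol.contVanishingOff hξ.isOpen (.of_tendsto hmeas habs hu)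
      (.of_tendsto hGmeas hGabs hGu) (hξ.contVanishingOff.const_mul (G a))
      fun x ↦ ⟨ge_of_tendsto' (hu x) fun n ↦ (hIcc n x).1, hu_le x⟩,
    fun x ↦ ⟨ge_of_tendsto' (hu x) fun n ↦ (hmem n).2.1 x, (hu_le x).trans (hξa x)⟩, hu_sol,
    fun w g hw hg hwg hbw hGg x ↦ le_of_tendsto' (hu x) fun n ↦
      hS.iterate_le hξ hb hG hG_mono hG0 hξa hw hg hwg hbw hGg n x⟩

end MonotoneScheme

end SemilinearProblem

section EnergyOfMinimalSolutions

variable {E : Type*} [NormedAddCommGroup E] [InnerProductSpace ℝ E] [FiniteDimensional ℝ E]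
  [MeasurableSpace E] [BorelSpace E] {k : LaplaceKernel E} {Ω : Set E} {ξ u b us ut : E → ℝ}
  {G F : ℝ → ℝ} {a p s t : ℝ}

namespace IsMinimalSolution

lemma nonneg (hu : IsMinimalSolution k Ω G a b u) (hb : ∀ x ∈ Ω, 0 < b x) (x : E) : 0 ≤ u x := by
  by_cases hx : x ∈ Ω
  · exact (hb x hx).le.trans (hu.mem_Icc x).1
  · exact (hu.contVanishingOff.eq_zero x hx).ge

lemma isBddMeasurable_const_mul_comp (hu : IsMinimalSolution k Ω G a b u)
    (hξ : IsTorsionDomain k Ω ξ) (hF : IsSublinearReaction F a p) (c : ℝ) :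
    IsBddMeasurable fun x ↦ c * F (u x) :=
  (hξ.isBddMeasurable (hu.contVanishingOff.comp hF.continuous hF.map_zero)).const_mul c

lemma mono_coeff (hξ : IsTorsionDomain k Ω ξ) (hF : IsSublinearReaction F a p)
    (hb : ∀ x ∈ Ω, 0 < b x) (hs : 0 ≤ s) (hst : s ≤ t)
    (hus : IsMinimalSolution k Ω (fun v ↦ s * F v) a b us)
    (hut : IsMinimalSolution k Ω (fun v ↦ t * F v) a b ut) (x : E) : us x ≤ ut x := by
  refine hus.le_of_supersolution hut.contVanishingOff
    (hut.isBddMeasurable_const_mul_comp hξ hF t) hut.isMeanValueSolution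
    (fun x ↦ (hut.mem_Icc x).1) (fun x _ ↦ ?_) x
  have := hF.nonneg (hut.nonneg hb x)
  calc s * F (min (ut x) a) ≤ s * F (ut x) :=
        mul_le_mul_of_nonneg_left (hF.monotone (min_le_left _ _)) hs
    _ ≤ t * F (ut x) := by gcongr

lemma reaction_min_mul_le (hF : IsSublinearReaction F a p) (hb : ∀ x ∈ Ω, 0 < b x)
    (hu : IsMinimalSolution k Ω G a b u) {m : ℝ} (hm : 1 ≤ m) {x : E} (hx : x ∈ Ω) :
    F (min (m * u x) a) ≤ m ^ p * F (u x) := by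
  have hux : 0 < u x := (hb x hx).trans_le (hu.mem_Icc x).1
  have hle : u x ≤ min (m * u x) a :=
    le_min (le_mul_of_one_le_left hux.le hm) (hu.mem_Icc x).2
  refine (hF.scaling hux hle (min_le_right _ _)).trans (mul_le_mul_of_nonneg_right ?_
    (hF.nonneg hux.le))
  exact rpow_le_rpow (div_nonneg (hux.le.trans hle) hux.le)
    ((div_le_iff₀ hux).2 (min_le_left _ _)) hF.p_nonneg

-- With `m = (t / s) ^ (1 / (1 - p))`, the scaling bound makes `m * us` a supersolution for the
-- coefficient `t`.
lemma le_rpow_div_mul (hξ : IsTorsionDomain k Ω ξ) (hF : IsSublinearReaction F a p)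
    (hb : ∀ x ∈ Ω, 0 < b x) (hs : 0 < s) (hst : s ≤ t)
    (hus : IsMinimalSolution k Ω (fun v ↦ s * F v) a b us)
    (hut : IsMinimalSolution k Ω (fun v ↦ t * F v) a b ut) (x : E) :
    ut x ≤ (t / s) ^ (1 - p)⁻¹ * us x := by
  have hp : 0 < 1 - p := sub_pos.2 hF.p_lt_one
  have hts : 1 ≤ t / s := (one_le_div hs).2 hst
  set m := (t / s) ^ (1 - p)⁻¹
  have hm : 1 ≤ m := one_le_rpow hts (by positivity)
  have hm_pow : t * m ^ p = m * s := by
    have h : m ^ (1 - p) * m ^ p = m := by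
      rw [← rpow_add (by positivity), sub_add_cancel, rpow_one]
    rw [rpow_inv_rpow (by positivity) hp.ne'] at h
    field_simp at h
    linarith
  refine hut.le_of_supersolution (hus.contVanishingOff.const_mul m)
    ((hus.isBddMeasurable_const_mul_comp hξ hF s).const_mul m)
    (hus.isMeanValueSolution.const_mul m)
    (fun x ↦ (hus.mem_Icc x).1.trans (le_mul_of_one_le_left (hus.nonneg hb x) hm))
    (fun x hx ↦ ?_) x
  calc t * F (min (m * us x) a) ≤ t * (m ^ p * F (us x)) :=
        mul_le_mul_of_nonneg_left (hus.reaction_min_mul_le hF hb hm hx) (hs.le.trans hst)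
    _ = m * (s * F (us x)) := by rw [← mul_assoc, hm_pow, mul_assoc]

lemma reaction_mul_le (hξ : IsTorsionDomain k Ω ξ) (hF : IsSublinearReaction F a p)
    (hb : ∀ x ∈ Ω, 0 < b x) (hs : 0 < s) (hst : s ≤ t)
    (hus : IsMinimalSolution k Ω (fun v ↦ s * F v) a b us)
    (hut : IsMinimalSolution k Ω (fun v ↦ t * F v) a b ut) (x : E) :
    F (ut x) * ut x ≤ (t / s) ^ ((1 + p) / (1 - p)) * (F (us x) * us x) := by
  by_cases hx : x ∈ Ω
  swap
  · simp [hus.contVanishingOff.eq_zero x hx, hut.contVanishingOff.eq_zero x hx]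
  have hts : 1 ≤ t / s := (one_le_div hs).2 hst
  have hm := le_rpow_div_mul hξ hF hb hs hst hus hut x
  have hexp : (t / s) ^ ((1 + p) / (1 - p)) =
      ((t / s) ^ (1 - p)⁻¹) ^ p * (t / s) ^ (1 - p)⁻¹ := by
    rw [← rpow_mul (by positivity), ← rpow_add (by positivity)]
    ring_nf
  set m := (t / s) ^ (1 - p)⁻¹
  have hm_one : 1 ≤ m := one_le_rpow hts (inv_nonneg.2 (sub_nonneg.2 hF.p_lt_one.le))
  have hFle : F (ut x) ≤ m ^ p * F (us x) :=
    (hF.monotone (le_min hm (hut.mem_Icc x).2)).trans (hus.reaction_min_mul_le hF hb hm_one hx)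
  have := hF.nonneg (hus.nonneg hb x)
  calc F (ut x) * ut x ≤ m ^ p * F (us x) * (m * us x) :=
        mul_le_mul hFle hm (hut.nonneg hb x) (by positivity)
    _ = (t / s) ^ ((1 + p) / (1 - p)) * (F (us x) * us x) := by
        rw [hexp]
        ring

end IsMinimalSolution

lemma integrable_reaction_mul (hF : IsSublinearReaction F a p) (hΩ : Bornology.IsBounded Ω)
    (hu : ContVanishingOff Ω u) : Integrable fun x ↦ F (u x) * u x :=
  ((hF.continuous.comp hu.continuous).mul hu.continuous).integrable_of_hasCompactSupport
    (hu.hasCompactSupport hΩ).mul_left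

lemma integral_reaction_mul_le (hF : IsSublinearReaction F a p) (hΩ : Bornology.IsBounded Ω)
    (hu : ContVanishingOff Ω u) (hua : ∀ x, u x ∈ Icc 0 a) :
    ∫ x, F (u x) * u x ≤ volume.real Ω * (F a * a) := by
  have hzero (x) (hx : x ∉ Ω) : F (u x) * u x = 0 := by rw [hu.eq_zero x hx, mul_zero]
  calc ∫ x, F (u x) * u x = ∫ x in Ω, F (u x) * u x :=
        (setIntegral_eq_integral_of_forall_compl_eq_zero hzero).symm
    _ ≤ ∫ _ in Ω, F a * a :=
        integral_mono (integrable_reaction_mul hF hΩ hu).integrableOn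
          (integrableOn_const hΩ.measure_lt_top.ne) fun x ↦
          mul_le_mul (hF.monotone (hua x).2) (hua x).2 (hua x).1 hF.map_pos.le
    _ = volume.real Ω * (F a * a) := by rw [setIntegral_const, smul_eq_mul]

lemma continuousOn_of_le_rpow_div_mul {I : ℝ → ℝ} {D : Set ℝ} {α : ℝ} (hD : ∀ t ∈ D, 0 < t)
    (hI : MonotoneOn I D)
    (hIα : ∀ s ∈ D, ∀ t ∈ D, s ≤ t → I t ≤ (t / s) ^ α * I s) : ContinuousOn I D := by
  intro r hr
  have hr0 := hD r hr
  have hbound (t) (ht : t ∈ D) : dist (I t) (I r) ≤ |(t / r) ^ α * I r - I r| := by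
    have ht0 := hD t ht
    rw [Real.dist_eq]
    rcases le_total r t with h | h
    · exact abs_le_abs_of_nonneg (sub_nonneg.2 (hI hr ht h))
        (sub_le_sub_right (hIα r hr t ht h) _)
    · rw [abs_sub_comm, abs_sub_comm _ (I r)]
      refine abs_le_abs_of_nonneg (sub_nonneg.2 (hI ht hr h)) (sub_le_sub_left ?_ _)
      calc (t / r) ^ α * I r ≤ (t / r) ^ α * ((r / t) ^ α * I t) :=
            mul_le_mul_of_nonneg_left (hIα t ht r hr h) (by positivity)
        _ = I t := by
            rw [← mul_assoc, ← mul_rpow (by positivity) (by positivity),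
              div_mul_div_cancel₀ hr0.ne', div_self ht0.ne', one_rpow, one_mul]
  have hlim : ContinuousAt (fun t ↦ |(t / r) ^ α * I r - I r|) r := by
    have : r / r ≠ 0 := div_ne_zero hr0.ne' hr0.ne'
    fun_prop (disch := simp [*])
  refine tendsto_iff_dist_tendsto_zero.2 (squeeze_zero' (.of_forall fun _ ↦ dist_nonneg)
    (eventually_mem_nhdsWithin.mono hbound) ?_)
  simpa [hr0.ne'] using hlim.tendsto.mono_left nhdsWithin_le_nhds

lemma exists_mul_one_add_mul_eq_one {I : ℝ → ℝ} {d C : ℝ} (hd : 0 ≤ d) (hC : 0 ≤ C)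
    (hI : ContinuousOn I (Icc (1 + d * C)⁻¹ 1))
    (hI_mem : ∀ t ∈ Icc (1 + d * C)⁻¹ 1, I t ∈ Icc 0 C) :
    ∃ t ∈ Icc (1 + d * C)⁻¹ 1, t * (1 + d * (t * I t)) = 1 := by
  have hdC : 0 < 1 + d * C := by positivity
  have hle : (1 + d * C)⁻¹ ≤ 1 := inv_le_one_of_one_le₀ (le_add_of_nonneg_right (by positivity))
  set t₀ := (1 + d * C)⁻¹
  have : 0 < t₀ := inv_pos.2 hdC
  have hcont : ContinuousOn (fun t ↦ t * (1 + d * (t * I t))) (Icc t₀ 1) := by fun_prop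
  refine intermediate_value_Icc hle hcont ⟨?_, ?_⟩
  · have hI₀ := hI_mem t₀ (left_mem_Icc.2 hle)
    calc t₀ * (1 + d * (t₀ * I t₀)) ≤ t₀ * (1 + d * (1 * C)) := by
          have := hI₀.1
          gcongr
          exact hI₀.2
      _ = 1 := by rw [one_mul, inv_mul_cancel₀ hdC.ne']
  · have := (hI_mem 1 (right_mem_Icc.2 hle)).1
    simp only [one_mul]
    exact le_add_of_nonneg_right (by positivity)

lemma isSubsolution_const_mul {φ : E → ℝ} {l ε : ℝ} (hF : IsSublinearReaction F a p)
    (hφ : ContVanishingOff Ω φ) (hφ_mem : ∀ x, φ x ∈ Icc 0 1)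
    (hφ_sol : k.IsMeanValueSolution Ω φ fun x ↦ l * φ x) (hΩ : Bornology.IsBounded Ω)
    (hε : 0 ≤ ε) (hεa : ε ≤ a) (hεF : ∀ v ∈ Icc 0 ε, l * v ≤ s * F v) (hst : s ≤ t) :
    IsSubsolution k Ω (fun v ↦ t * F v) a fun x ↦ ε * φ x where
  contVanishingOff := hφ.const_mul ε
  mem_Icc x := ⟨mul_nonneg hε (hφ_mem x).1, (mul_le_of_le_one_right hε (hφ_mem x).2).trans hεa⟩
  exists_le := by
    refine ⟨_, ((hφ.isBddMeasurable hΩ).const_mul l).const_mul ε, hφ_sol.const_mul ε,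
      fun x _ ↦ ?_⟩
    have hεφ : ε * φ x ∈ Icc 0 ε :=
      ⟨mul_nonneg hε (hφ_mem x).1, mul_le_of_le_one_right hε (hφ_mem x).2⟩
    calc ε * (l * φ x) = l * (ε * φ x) := mul_left_comm _ _ _
      _ ≤ s * F (ε * φ x) := hεF _ hεφ
      _ ≤ t * F (ε * φ x) := mul_le_mul_of_nonneg_right hst (hF.nonneg hεφ.1)

end EnergyOfMinimalSolutions

section NonlocalCoefficient

variable {E : Type*} [NormedAddCommGroup E] [InnerProductSpace ℝ E] [FiniteDimensional ℝ E]
  [MeasurableSpace E] [BorelSpace E] {k : LaplaceKernel E} {Ω : Set E} {ξ φ b us ut : E → ℝ}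
  {S : (E → ℝ) → E → ℝ} {F : ℝ → ℝ} {a p d l s t : ℝ}

namespace IsMinimalSolution

lemma integral_reaction_mul_mono (hξ : IsTorsionDomain k Ω ξ) (hF : IsSublinearReaction F a p)
    (hb : ∀ x ∈ Ω, 0 < b x) (hs : 0 ≤ s) (hst : s ≤ t)
    (hus : IsMinimalSolution k Ω (fun v ↦ s * F v) a b us)
    (hut : IsMinimalSolution k Ω (fun v ↦ t * F v) a b ut) :
    ∫ x, F (us x) * us x ≤ ∫ x, F (ut x) * ut x := by
  refine integral_mono (integrable_reaction_mul hF hξ.isBounded hus.contVanishingOff)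
    (integrable_reaction_mul hF hξ.isBounded hut.contVanishingOff) fun x ↦ ?_
  have hle := mono_coeff hξ hF hb hs hst hus hut x
  exact mul_le_mul (hF.monotone hle) hle (hus.nonneg hb x) (hF.nonneg (hut.nonneg hb x))

lemma integral_reaction_mul_le_rpow_mul (hξ : IsTorsionDomain k Ω ξ)
    (hF : IsSublinearReaction F a p) (hb : ∀ x ∈ Ω, 0 < b x) (hs : 0 < s) (hst : s ≤ t)
    (hus : IsMinimalSolution k Ω (fun v ↦ s * F v) a b us)
    (hut : IsMinimalSolution k Ω (fun v ↦ t * F v) a b ut) :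
    ∫ x, F (ut x) * ut x ≤ (t / s) ^ ((1 + p) / (1 - p)) * ∫ x, F (us x) * us x := by
  rw [← integral_const_mul]
  exact integral_mono (integrable_reaction_mul hF hξ.isBounded hut.contVanishingOff)
    ((integrable_reaction_mul hF hξ.isBounded hus.contVanishingOff).const_mul _)
    fun x ↦ reaction_mul_le hξ hF hb hs hst hus hut x

end IsMinimalSolution

lemma IsPoissonSolver.exists_isMinimalSolution_mul_one_add_mul_eq_one
    (hS : IsPoissonSolver k Ω S) (hξ : IsTorsionDomain k Ω ξ) (hF : IsSublinearReaction F a p)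
    (hξa : ∀ x, F a * ξ x ≤ a) (hd : 0 ≤ d) (hb : ∀ x ∈ Ω, 0 < b x)
    (hsub : ∀ t ∈ Icc (1 + d * (volume.real Ω * (F a * a)))⁻¹ 1,
      IsSubsolution k Ω (fun v ↦ t * F v) a b) :
    ∃ t u, 0 < t ∧ IsMinimalSolution k Ω (fun v ↦ t * F v) a b u ∧
      t * (1 + d * (t * ∫ x, F (u x) * u x)) = 1 := by
  have hC : 0 ≤ volume.real Ω * (F a * a) :=
    mul_nonneg measureReal_nonneg (mul_pos hF.map_pos hF.a_pos).le
  set D := Icc (1 + d * (volume.real Ω * (F a * a)))⁻¹ 1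
  have hD (t) (ht : t ∈ D) : 0 < t := (by positivity : (0 : ℝ) < _⁻¹).trans_le ht.1
  have hsol (t) (ht : t ∈ D) : ∃ u, IsMinimalSolution k Ω (fun v ↦ t * F v) a b u := by
    refine hS.exists_isMinimalSolution hξ (hsub t ht) (hF.continuous.const_mul t)
      (hF.monotone.const_mul (hD t ht).le) (by rw [hF.map_zero, mul_zero]) fun x ↦ ?_
    have hFξ := mul_nonneg hF.map_pos.le (hξ.nonneg x)
    rw [mul_assoc]
    exact (mul_le_of_le_one_left hFξ ht.2).trans (hξa x)
  choose! u hu using hsol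
  have hcont : ContinuousOn (fun t ↦ ∫ x, F (u t x) * u t x) D :=
    continuousOn_of_le_rpow_div_mul hD
      (fun s hs t ht hst ↦ IsMinimalSolution.integral_reaction_mul_mono hξ hF hb (hD s hs).le hst
        (hu s hs) (hu t ht))
      fun s hs t ht hst ↦ IsMinimalSolution.integral_reaction_mul_le_rpow_mul hξ hF hb (hD s hs)
        hst (hu s hs) (hu t ht)
  obtain ⟨t, ht, ht_eq⟩ := exists_mul_one_add_mul_eq_one hd hC hcont fun t ht ↦
    ⟨integral_nonneg fun x ↦
      mul_nonneg (hF.nonneg ((hu t ht).nonneg hb x)) ((hu t ht).nonneg hb x),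
      integral_reaction_mul_le hF hξ.isBounded (hu t ht).contVanishingOff fun x ↦
        ⟨(hu t ht).nonneg hb x, ((hu t ht).mem_Icc x).2⟩⟩
  exact ⟨t, u t, hD t ht, hu t ht, ht_eq⟩

lemma IsPoissonSolver.exists_pos_isMeanValueSolution (hS : IsPoissonSolver k Ω S)
    (hξ : IsTorsionDomain k Ω ξ) (hF : IsSublinearReaction F a p) (hξa : ∀ x, F a * ξ x ≤ a)
    (hd : 0 ≤ d) (hl : 0 < l) (hφ : ContVanishingOff Ω φ) (hφ_pos : ∀ x ∈ Ω, 0 < φ x)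
    (hφ_le : ∀ x, φ x ≤ 1) (hφ_sol : k.IsMeanValueSolution Ω φ fun x ↦ l * φ x) :
    ∃ t u, 0 < t ∧ ContVanishingOff Ω u ∧ (∀ x ∈ Ω, u x ∈ Ioc 0 a) ∧
      k.IsMeanValueSolution Ω u (fun x ↦ t * F (u x)) ∧
      t * (1 + d * (t * ∫ x, F (u x) * u x)) = 1 := by
  have hC : 0 ≤ volume.real Ω * (F a * a) :=
    mul_nonneg measureReal_nonneg (mul_pos hF.map_pos hF.a_pos).le
  obtain ⟨ε, hε, hεa, hεF⟩ := hF.exists_mul_le hl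
    (by positivity : 0 < (1 + d * (volume.real Ω * (F a * a)))⁻¹)
  have hφ_mem (x) : φ x ∈ Icc 0 1 := by
    refine ⟨?_, hφ_le x⟩
    by_cases hx : x ∈ Ω
    · exact (hφ_pos x hx).le
    · exact (hφ.eq_zero x hx).ge
  have hεφ (x) (hx : x ∈ Ω) : 0 < ε * φ x := mul_pos hε (hφ_pos x hx)
  obtain ⟨t, u, ht, hu, ht_eq⟩ := hS.exists_isMinimalSolution_mul_one_add_mul_eq_one hξ hF hξa hd
    hεφ fun t ht ↦ isSubsolution_const_mul hF hφ hφ_mem hφ_sol hξ.isBounded hε.le hεa hεF ht.1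
  exact ⟨t, u, ht, hu.contVanishingOff,
    fun x hx ↦ ⟨(hεφ x hx).trans_le (hu.mem_Icc x).1, (hu.mem_Icc x).2⟩,
    hu.isMeanValueSolution, ht_eq⟩

end NonlocalCoefficient

section EnergyIdentity

open Filter Topology

variable {N : ℕ} {Ω : Set (EuclideanSpace ℝ (Fin N))} {u v w g : EuclideanSpace ℝ (Fin N) → ℝ}

lemma inner_gradient_eq_sum (w v : EuclideanSpace ℝ (Fin N) → ℝ) (x : EuclideanSpace ℝ (Fin N)) :
    inner ℝ (gradient w x) (gradient v x) =
      ∑ i, fderiv ℝ w x (EuclideanSpace.single i 1) * fderiv ℝ v x (EuclideanSpace.single i 1) := by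
  rw [← (EuclideanSpace.basisFun (Fin N) ℝ).sum_inner_mul_inner]
  simp only [EuclideanSpace.basisFun_apply, inner_gradient_left, real_inner_comm (gradient v x)]

lemma integrable_and_integral_inner_gradient_eq (hw : ContDiff ℝ 2 w)
    (hw_supp : HasCompactSupport w) (hv : ContDiff ℝ 1 v) :
    Integrable (fun x ↦ inner ℝ (gradient w x) (gradient v x)) ∧
      ∫ x, inner ℝ (gradient w x) (gradient v x) = ∫ x, -lapl w x * v x := by
  have hDw (i) : ContDiff ℝ 1 fun y ↦ fderiv ℝ w y (EuclideanSpace.single i 1) :=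
    (hw.fderiv_right (m := 1) (by norm_num)).clm_apply contDiff_const
  have hDw_supp (i) : HasCompactSupport fun y ↦ fderiv ℝ w y (EuclideanSpace.single i 1) :=
    hw_supp.fderiv_apply (𝕜 := ℝ) _
  have hDv (i) : Continuous fun y ↦ fderiv ℝ v y (EuclideanSpace.single i 1) :=
    (hv.continuous_fderiv one_ne_zero).clm_apply continuous_const
  have hDwDv (i) : Integrable fun x ↦ fderiv ℝ w x (EuclideanSpace.single i 1) *
      fderiv ℝ v x (EuclideanSpace.single i 1) :=
    ((hDw i).continuous.mul (hDv i)).integrable_of_hasCompactSupport (hDw_supp i).mul_right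
  have hDDw (i) : Integrable fun x ↦ fderiv ℝ (fun y ↦ fderiv ℝ w y (EuclideanSpace.single i 1)) x
      (EuclideanSpace.single i 1) * v x :=
    ((((hDw i).continuous_fderiv one_ne_zero).clm_apply continuous_const).mul
      hv.continuous).integrable_of_hasCompactSupport
        ((hDw_supp i).fderiv_apply (𝕜 := ℝ) _).mul_right
  have hparts (i) := integral_mul_fderiv_eq_neg_fderiv_mul_of_integrable (hDDw i) (hDwDv i)
    (((hDw i).continuous.mul hv.continuous).integrable_of_hasCompactSupport (hDw_supp i).mul_right)
    (fun x _ ↦ (hDw i).differentiable one_ne_zero x) (fun x _ ↦ hv.differentiable one_ne_zero x)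
  simp only [inner_gradient_eq_sum]
  refine ⟨integrable_finsetSum _ fun i _ ↦ hDwDv i, ?_⟩
  rw [integral_finsetSum _ fun i _ ↦ hDwDv i]
  simp only [hparts, lapl, neg_mul, Finset.sum_mul, integral_neg]
  rw [integral_finsetSum _ fun i _ ↦ hDDw i, Finset.sum_neg_distrib]

lemma intervalIntegral_eq_zero_of_le {θ : ℝ → ℝ} {δ s : ℝ} (hδ : 0 ≤ δ) (hθ : ∀ r ≤ δ, θ r = 0)
    (hs : s ≤ δ) : ∫ r in 0..s, θ r = 0 :=
  (intervalIntegral.integral_congr fun r hr ↦ hθ r (hr.2.trans (max_le hδ hs))).trans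
    intervalIntegral.integral_zero

lemma hasFDerivAt_intervalIntegral_comp {θ : ℝ → ℝ} {δ : ℝ} (hδ : 0 ≤ δ) (hθ : Continuous θ)
    (hθ_zero : ∀ r ≤ δ, θ r = 0) (hu : Continuous u) (hw : Differentiable ℝ w)
    (hwu : w =ᶠ[𝓝ˢ {x | δ ≤ u x}] u) (x : EuclideanSpace ℝ (Fin N)) :
    HasFDerivAt (fun x ↦ ∫ r in 0..u x, θ r) (θ (u x) • fderiv ℝ w x) x := by
  rcases le_or_gt δ (u x) with hx | hx
  · have hwux : w =ᶠ[𝓝 x] u := eventually_nhdsSet_iff_forall.1 hwu x hx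
    exact (hθ.integral_hasStrictDerivAt 0 (u x)).hasDerivAt.comp_hasFDerivAt x
      ((hw x).hasFDerivAt.congr_of_eventuallyEq hwux.symm)
  · rw [hθ_zero _ hx.le, zero_smul]
    refine (hasFDerivAt_const (0 : ℝ) x).congr_of_eventuallyEq ?_
    filter_upwards [hu.continuousAt.eventually_lt_const hx] with y hy
    exact intervalIntegral_eq_zero_of_le hδ hθ_zero hy.le

lemma integrable_and_integral_mul_norm_gradient_sq_eq {θ : ℝ → ℝ} {δ : ℝ} (hΩ : IsOpen Ω)
    (hΩ_bdd : Bornology.IsBounded Ω) (hu : ContVanishingOff Ω u) (hu2 : ContDiffOn ℝ 2 u Ω)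
    (hug : ∀ x ∈ Ω, -lapl u x = g x) (hδ : 0 < δ) (hθ : Continuous θ)
    (hθ_zero : ∀ r ≤ δ, θ r = 0) :
    Integrable (fun x ↦ θ (u x) * ‖gradient u x‖ ^ 2) ∧
      ∫ x, θ (u x) * ‖gradient u x‖ ^ 2 = ∫ x, g x * ∫ r in 0..u x, θ r := by
  set K := {x | δ ≤ u x}
  have hKΩ : K ⊆ Ω := fun x hx ↦ by_contra fun hxΩ ↦
    (hδ.trans_le hx).ne' (hu.eq_zero x hxΩ)
  have hK : IsCompact K := Metric.isCompact_of_isClosed_isBounded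
    (isClosed_le continuous_const hu.continuous) (hΩ_bdd.subset hKΩ)
  obtain ⟨w, hw, hw_supp, hwu⟩ :=
    exists_contDiff_hasCompactSupport_eventuallyEq (n := 2) hK hΩ hKΩ hu2
  have hwu_nhds (x) (hx : x ∈ K) : w =ᶠ[𝓝 x] u := eventually_nhdsSet_iff_forall.1 hwu x hx
  have hw_diff : Differentiable ℝ w := hw.differentiable two_ne_zero
  have hv := hasFDerivAt_intervalIntegral_comp hδ.le hθ hθ_zero hu.continuous hw_diff hwu
  set v := fun x ↦ ∫ r in 0..u x, θ r
  have hv1 : ContDiff ℝ 1 v := by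
    refine contDiff_one_iff_fderiv.2 ⟨fun x ↦ (hv x).differentiableAt, ?_⟩
    rw [funext fun x ↦ (hv x).fderiv]
    exact (hθ.comp hu.continuous).smul (hw.continuous_fderiv two_ne_zero)
  have hinner (x) : inner ℝ (gradient w x) (gradient v x) = θ (u x) * ‖gradient u x‖ ^ 2 := by
    have hgrad : gradient v x = θ (u x) • gradient w x := by
      rw [gradient, (hv x).fderiv, map_smulₛₗ, gradient, conj_trivial]
    rw [hgrad, inner_smul_right, real_inner_self_eq_norm_sq]
    rcases le_or_gt δ (u x) with hx | hx
    · rw [gradient, gradient, (hwu_nhds x hx).fderiv_eq]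
    · rw [hθ_zero _ hx.le, zero_mul, zero_mul]
  have hgreen := integrable_and_integral_inner_gradient_eq hw hw_supp hv1
  simp only [hinner] at hgreen
  refine ⟨hgreen.1, hgreen.2.trans (integral_congr_ae (.of_forall fun x ↦ ?_))⟩
  change -lapl w x * v x = g x * v x
  rcases le_or_gt δ (u x) with hx | hx
  · rw [lapl_congr (hwu_nhds x hx), hug x (hKΩ hx)]
  · have hvx : v x = 0 := intervalIntegral_eq_zero_of_le hδ.le hθ_zero hx.le
    rw [hvx, mul_zero, mul_zero]

/-- The piecewise linear cutoff that vanishes up to `1 / (n + 1)` and equals `1` from `2 / (n + 1)`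
on. -/
def ramp (n : ℕ) (r : ℝ) : ℝ := max 0 (min 1 ((n + 1) * r - 1))

lemma continuous_ramp (n : ℕ) : Continuous (ramp n) := by unfold ramp; fun_prop

lemma ramp_mem_Icc (n : ℕ) (r : ℝ) : ramp n r ∈ Icc 0 1 :=
  ⟨le_max_left _ _, max_le zero_le_one (min_le_left _ _)⟩

lemma ramp_eq_zero {n : ℕ} {r : ℝ} (hr : r ≤ 1 / ((n : ℝ) + 1)) : ramp n r = 0 := by
  rw [le_div_iff₀' (by positivity)] at hr
  exact max_eq_left ((min_le_right _ _).trans (sub_nonpos.2 hr))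

lemma monotone_ramp_apply {r : ℝ} (hr : 0 ≤ r) : Monotone fun n ↦ ramp n r := fun m n hmn ↦ by
  have : (m : ℝ) ≤ n := mod_cast hmn
  simp only [ramp]
  gcongr

lemma tendsto_ramp_apply {r : ℝ} (hr : 0 < r) : Tendsto (fun n ↦ ramp n r) atTop (𝓝 1) := by
  refine tendsto_const_nhds.congr' ?_
  obtain ⟨m, hm⟩ := exists_nat_gt (2 / r)
  rw [div_lt_iff₀ hr] at hm
  filter_upwards [eventually_ge_atTop m] with n hn
  have hmn : (m : ℝ) * r ≤ n * r := by gcongr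
  rw [ramp, min_eq_left (by linarith), max_eq_right zero_le_one]

lemma abs_integral_ramp_le (n : ℕ) (s : ℝ) : |∫ r in 0..s, ramp n r| ≤ |s| := by
  have h := intervalIntegral.norm_integral_le_of_norm_le_const (a := 0) (b := s) (f := ramp n)
    (C := 1) fun r _ ↦ (abs_of_nonneg (ramp_mem_Icc n r).1).trans_le (ramp_mem_Icc n r).2
  simpa using h

lemma tendsto_integral_ramp {s : ℝ} (hs : 0 ≤ s) :
    Tendsto (fun n ↦ ∫ r in 0..s, ramp n r) atTop (𝓝 s) := by
  have h : Tendsto (fun n ↦ ∫ r in 0..s, ramp n r) atTop (𝓝 (∫ _ in 0..s, (1 : ℝ))) := by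
    refine intervalIntegral.tendsto_integral_filter_of_dominated_convergence (fun _ ↦ 1)
      (.of_forall fun n ↦ (continuous_ramp n).aestronglyMeasurable)
      (.of_forall fun n ↦ .of_forall fun r _ ↦ ?_) intervalIntegrable_const
      (.of_forall fun r hr ↦ tendsto_ramp_apply ?_)
    · exact (abs_of_nonneg (ramp_mem_Icc n r).1).trans_le (ramp_mem_Icc n r).2
    · rw [uIoc_of_le hs] at hr
      exact hr.1
  simpa using h

lemma gradNorm2_sq_eq_toReal_lintegral (Ω : Set (EuclideanSpace ℝ (Fin N)))
    (u : EuclideanSpace ℝ (Fin N) → ℝ) :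
    gradNorm2 Ω u ^ 2 = (∫⁻ x in Ω, ENNReal.ofReal (‖gradient u x‖ ^ 2)).toReal := by
  rw [gradNorm2, eLpNorm_eq_lintegral_rpow_enorm_toReal two_ne_zero ENNReal.ofNat_ne_top,
    ← ENNReal.toReal_pow, ← ENNReal.rpow_natCast, ← ENNReal.rpow_mul]
  norm_num

lemma tendsto_integral_mul_integral_ramp (hΩ : Bornology.IsBounded Ω) (hu : ContVanishingOff Ω u)
    (hu_nonneg : ∀ x, 0 ≤ u x) (hg : Continuous g) :
    Tendsto (fun n ↦ ∫ x, g x * ∫ r in 0..u x, ramp n r) atTop (𝓝 (∫ x, g x * u x)) := by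
  have hgu : Integrable fun x ↦ g x * u x :=
    (hg.mul hu.continuous).integrable_of_hasCompactSupport (hu.hasCompactSupport hΩ).mul_left
  have hprim (n) : Continuous fun s ↦ ∫ r in 0..s, ramp n r :=
    intervalIntegral.continuous_primitive (fun _ _ ↦ (continuous_ramp n).intervalIntegrable _ _) 0
  refine tendsto_integral_of_dominated_convergence (fun x ↦ |g x * u x|)
    (fun n ↦ (hg.mul ((hprim n).comp hu.continuous)).aestronglyMeasurable) hgu.abs
    (fun n ↦ .of_forall fun x ↦ ?_)
    (.of_forall fun x ↦ (tendsto_integral_ramp (hu_nonneg x)).const_mul _)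
  rw [Real.norm_eq_abs, abs_mul, abs_mul]
  exact mul_le_mul_of_nonneg_left (abs_integral_ramp_le n _) (abs_nonneg _)

lemma tendsto_lintegral_ramp_mul (hΩ : IsOpen Ω) (hu_nonneg : ∀ x, 0 ≤ u x)
    (hu_pos : ∀ x ∈ Ω, 0 < u x)
    (hu_int : ∀ n, Integrable fun x ↦ ramp n (u x) * ‖gradient u x‖ ^ 2) :
    Tendsto (fun n ↦ ∫⁻ x in Ω, ENNReal.ofReal (ramp n (u x) * ‖gradient u x‖ ^ 2)) atTop
      (𝓝 (∫⁻ x in Ω, ENNReal.ofReal (‖gradient u x‖ ^ 2))) := by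
  refine lintegral_tendsto_of_tendsto_of_monotone
    (fun n ↦ (hu_int n).aemeasurable.restrict.ennreal_ofReal) (.of_forall fun x m n hmn ↦ ?_) ?_
  · exact ENNReal.ofReal_le_ofReal
      (mul_le_mul_of_nonneg_right (monotone_ramp_apply (hu_nonneg x) hmn) (by positivity))
  · filter_upwards [ae_restrict_mem hΩ.measurableSet] with x hx
    simpa only [one_mul] using ENNReal.tendsto_ofReal
      ((tendsto_ramp_apply (hu_pos x hx)).mul_const (‖gradient u x‖ ^ 2))

-- Nothing is known about `∇u` near `∂Ω`, so the equation is tested with functions of `u` that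
-- vanish where `u` is small.
lemma gradNorm2_sq_eq_integral (hΩ : IsOpen Ω) (hΩ_bdd : Bornology.IsBounded Ω)
    (hu : ContVanishingOff Ω u) (hu_pos : ∀ x ∈ Ω, 0 < u x) (hu2 : ContDiffOn ℝ 2 u Ω)
    (hug : ∀ x ∈ Ω, -lapl u x = g x) (hg : Continuous g) (hg_nonneg : ∀ x ∈ Ω, 0 ≤ g x) :
    gradNorm2 Ω u ^ 2 = ∫ x, g x * u x := by
  have hu_nonneg (x) : 0 ≤ u x := by
    by_cases hx : x ∈ Ω
    · exact (hu_pos x hx).le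
    · exact (hu.eq_zero x hx).ge
  have henergy (n : ℕ) := integrable_and_integral_mul_norm_gradient_sq_eq hΩ hΩ_bdd hu hu2 hug
    (by positivity : 0 < 1 / ((n : ℝ) + 1)) (continuous_ramp n) fun r hr ↦ ramp_eq_zero hr
  have hlintegral (n : ℕ) : ∫⁻ x in Ω, ENNReal.ofReal (ramp n (u x) * ‖gradient u x‖ ^ 2) =
      ENNReal.ofReal (∫ x, g x * ∫ r in 0..u x, ramp n r) := by
    rw [← (henergy n).2, ← setIntegral_eq_integral_of_forall_compl_eq_zero (s := Ω),
      ofReal_integral_eq_lintegral_ofReal (henergy n).1.integrableOn]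
    · exact .of_forall fun x ↦ mul_nonneg (ramp_mem_Icc n _).1 (by positivity)
    · intro x hx
      rw [hu.eq_zero x hx, ramp_eq_zero (by positivity), zero_mul]
  have hlim := tendsto_lintegral_ramp_mul hΩ hu_nonneg hu_pos fun n ↦ (henergy n).1
  simp only [hlintegral] at hlim
  rw [gradNorm2_sq_eq_toReal_lintegral, tendsto_nhds_unique hlim (ENNReal.tendsto_ofReal
    (tendsto_integral_mul_integral_ramp hΩ_bdd hu hu_nonneg hg)), ENNReal.toReal_ofReal]
  refine integral_nonneg fun x ↦ ?_
  by_cases hx : x ∈ Ω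
  · exact mul_nonneg (hg_nonneg x hx) (hu_nonneg x)
  · simp [hu.eq_zero x hx]

end EnergyIdentity

section KirchhoffProblem

variable {N : ℕ} {k : LaplaceKernel (EuclideanSpace ℝ (Fin N))}
  {Ω : Set (EuclideanSpace ℝ (Fin N))} {ξ φ u : EuclideanSpace ℝ (Fin N) → ℝ} {F G : ℝ → ℝ}
  {d l t : ℝ}

lemma IsTorsionFn.isTorsionDomain (h : IsTorsionFn Ω ξ)
    (k : LaplaceKernel (EuclideanSpace ℝ (Fin N))) (hΩ : IsOpen Ω)
    (hΩ_bdd : Bornology.IsBounded Ω) : IsTorsionDomain k Ω (Ω.indicator ξ) := by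
  obtain ⟨hξ_cont, hξ2, -, hξ_eq, hξ_bdry⟩ := h
  exact ⟨hΩ, hΩ_bdd, .indicator hξ_cont hξ_bdry,
    (k.isMeanValueSolution_of_contDiffOn hΩ hξ2 hξ_eq).congr eqOn_indicator.symm (eqOn_refl _ _)⟩

lemma IsFirstEigenpair.contVanishingOff (h : IsFirstEigenpair Ω l φ) :
    ContVanishingOff Ω (Ω.indicator φ) :=
  .indicator h.2.1 h.2.2.2.2.2.1

lemma IsFirstEigenpair.indicator_pos (h : IsFirstEigenpair Ω l φ) :
    ∀ x ∈ Ω, 0 < Ω.indicator φ x := fun x hx ↦ by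
  rw [indicator_of_mem hx]
  exact h.2.2.2.1 x hx

lemma IsFirstEigenpair.indicator_le_one (h : IsFirstEigenpair Ω l φ)
    (x : EuclideanSpace ℝ (Fin N)) : Ω.indicator φ x ≤ 1 :=
  indicator_apply_le' (fun hx ↦ h.2.2.2.2.2.2.2 ⟨x, subset_closure hx, rfl⟩) fun _ ↦ zero_le_one

lemma IsFirstEigenpair.isMeanValueSolution (h : IsFirstEigenpair Ω l φ)
    (k : LaplaceKernel (EuclideanSpace ℝ (Fin N))) (hΩ : IsOpen Ω) :
    k.IsMeanValueSolution Ω (Ω.indicator φ) fun x ↦ l * Ω.indicator φ x :=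
  (k.isMeanValueSolution_of_contDiffOn hΩ h.2.2.1 h.2.2.2.2.1).congr eqOn_indicator.symm
    fun x hx ↦ by rw [indicator_of_mem hx]

lemma IsTorsionDomain.exists_pos_forall_le (hξ : IsTorsionDomain k Ω ξ) :
    ∃ X, 0 < X ∧ ∀ x, ξ x ≤ X := by
  obtain ⟨X, hX⟩ := (hξ.isBddMeasurable hξ.contVanishingOff).bounded
  exact ⟨max X 1, lt_max_of_lt_right one_pos, fun x ↦
    (le_abs_self _).trans ((hX x).trans (le_max_left _ _))⟩

lemma IsTorsionDomain.exists_isPoissonSolver (hξ : IsTorsionDomain k Ω ξ) :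
    ∃ S, IsPoissonSolver k Ω S := by
  have h (f) (hf : ContVanishingOff Ω f ∧ ∀ x, 0 ≤ f x) :
      ∃ u, ContVanishingOff Ω u ∧ k.IsMeanValueSolution Ω u f := by
    obtain ⟨M, hM⟩ := (hξ.isBddMeasurable hf.1).bounded
    obtain ⟨u, hu, -, huf⟩ := hξ.exists_isMeanValueSolution hf.1 hf.2 fun x ↦
      (le_abs_self _).trans (hM x)
    exact ⟨u, hu, huf⟩
  choose! S hS using h
  exact ⟨S, fun f hf hf_nonneg ↦ hS f ⟨hf, hf_nonneg⟩⟩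

lemma LaplaceKernel.IsMeanValueSolution.contDiffOn_two_and_neg_lapl_eq
    (h : k.IsMeanValueSolution Ω u fun x ↦ G (u x)) (hΩ : IsOpen Ω)
    (hΩ_bdd : Bornology.IsBounded Ω) (hu : ContVanishingOff Ω u) (hG : Continuous G)
    (hG0 : G 0 = 0) (hG1 : ∀ x ∈ Ω, ContDiffAt ℝ 1 G (u x)) :
    ContDiffOn ℝ 2 u Ω ∧ ∀ x ∈ Ω, -lapl u x = G (u x) := by
  have hGu := hu.comp hG hG0
  have hGu_bdd := hGu.isBddMeasurable hΩ_bdd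
  have hu_bdd := hu.isBddMeasurable hΩ_bdd
  have hu1 : ContDiffOn ℝ 1 u Ω := h.contDiffOn_one hΩ hu_bdd hGu_bdd
  have hGu1 : ContDiffOn ℝ 1 (fun x ↦ G (u x)) Ω := fun x hx ↦
    (hG1 x hx).comp_contDiffWithinAt x (hu1 x hx)
  have hu2 : ContDiffOn ℝ 2 u Ω := h.contDiffOn_two hΩ hu_bdd hGu1
  exact ⟨hu2, fun x hx ↦ h.neg_lapl_eq hΩ hu2 hGu_bdd hGu.continuous.continuousOn hx⟩

lemma neg_one_add_gradNorm2_sq_mul_lapl_eq (hΩ : IsOpen Ω) (hΩ_bdd : Bornology.IsBounded Ω)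
    (hu : ContVanishingOff Ω u) (hu_pos : ∀ x ∈ Ω, 0 < u x) (hu2 : ContDiffOn ℝ 2 u Ω)
    (hF : Continuous F) (hF_nonneg : ∀ x ∈ Ω, 0 ≤ F (u x)) (ht : 0 ≤ t)
    (hu_eq : ∀ x ∈ Ω, -lapl u x = t * F (u x))
    (ht_eq : t * (1 + d * (t * ∫ x, F (u x) * u x)) = 1) :
    ∀ x ∈ Ω, (-(1 + d * gradNorm2 Ω u ^ 2)) * lapl u x = F (u x) := by
  have henergy : gradNorm2 Ω u ^ 2 = t * ∫ x, F (u x) * u x := by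
    rw [gradNorm2_sq_eq_integral hΩ hΩ_bdd hu hu_pos hu2 hu_eq
      ((hF.comp hu.continuous).const_mul t) fun x hx ↦ mul_nonneg ht (hF_nonneg x hx)]
    simp only [mul_assoc, integral_const_mul]
  intro x hx
  rw [henergy, neg_mul, ← mul_neg, hu_eq x hx, mul_left_comm, ← mul_assoc, ht_eq, one_mul]

theorem stmt_11_general (hN : 1 ≤ N) (hΩ : IsOpen Ω) (hΩ_bdd : Bornology.IsBounded Ω) {q : ℝ}
    (hq0 : 0 < q) (hq1 : q < 1) (hd : 0 ≤ d) (hφ : IsFirstEigenpair Ω l φ) (hξ : IsTorsionFn Ω ξ) :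
    ∃ μ₀ : ℝ, 0 < μ₀ ∧ ∀ μ : ℝ, 0 < μ → μ < μ₀ →
      ∃ u : EuclideanSpace ℝ (Fin N) → ℝ,
        ContinuousOn u (closure Ω) ∧ ContDiffOn ℝ 2 u Ω ∧
        (∀ x ∈ Ω, (-(1 + d * (gradNorm2 Ω u) ^ 2)) * lapl u x
          = μ * u x ^ q + π * Real.sin (u x) ^ 3) ∧
        (∀ x ∈ Ω, 0 < u x ∧ u x ≤ π / 2) ∧
        (∀ x ∈ frontier Ω, u x = 0) := by
  have : NeZero N := ⟨by lia⟩
  obtain ⟨k⟩ : Nonempty (LaplaceKernel (EuclideanSpace ℝ (Fin N))) := inferInstance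
  have hξ := hξ.isTorsionDomain k hΩ hΩ_bdd
  obtain ⟨S, hS⟩ := hξ.exists_isPoissonSolver
  obtain ⟨X, hX, hξX⟩ := hξ.exists_pos_forall_le
  obtain ⟨μ₀, hμ₀, hF⟩ := exists_isSublinearReaction_truncatedReaction hq0 hq1 hX
  refine ⟨μ₀, hμ₀, fun μ hμ hμμ₀ ↦ ?_⟩
  obtain ⟨a, p, ha, hF, hFa⟩ := hF μ hμ hμμ₀
  have hFξ (x) : truncatedReaction μ q a * Ω.indicator ξ x ≤ a := by
    rw [mul_comm]
    exact (mul_le_mul_of_nonneg_right (hξX x) hF.map_pos.le).trans hFa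
  obtain ⟨t, u, ht, hu, hu_mem, hu_sol, ht_eq⟩ := hS.exists_pos_isMeanValueSolution hξ hF hFξ hd
    hφ.1 hφ.contVanishingOff hφ.indicator_pos hφ.indicator_le_one (hφ.isMeanValueSolution k hΩ)
  obtain ⟨hu2, hu_eq⟩ := hu_sol.contDiffOn_two_and_neg_lapl_eq hΩ hΩ_bdd hu
    (hF.continuous.const_mul t) (by rw [hF.map_zero, mul_zero]) fun x hx ↦ contDiffAt_const.mul
      (contDiffAt_truncatedReaction ⟨(hu_mem x hx).1, (hu_mem x hx).2.trans_lt ha⟩)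
  refine ⟨u, hu.continuous.continuousOn, hu2, fun x hx ↦ ?_,
    fun x hx ↦ ⟨(hu_mem x hx).1, (hu_mem x hx).2.trans ha.le⟩,
    fun x hx ↦ hu.eq_zero x (hΩ.frontier_eq ▸ hx).2⟩
  rw [← truncatedReaction_of_mem_Icc ⟨(hu_mem x hx).1.le, (hu_mem x hx).2.trans ha.le⟩]
  exact neg_one_add_gradNorm2_sq_mul_lapl_eq hΩ hΩ_bdd hu (fun x hx ↦ (hu_mem x hx).1) hu2
    hF.continuous (fun x hx ↦ hF.nonneg (hu_mem x hx).1.le) ht.le hu_eq ht_eq x hx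

end KirchhoffProblem

/-- Theorem 2.4: for small `μ > 0`, the problem
`-(1 + d‖∇u‖₂²) Δu = μ u^q + π sin³(u)`, `u > 0` in `Ω`, `u = 0` on `∂Ω`,
has a classical solution satisfying `0 < u ≤ π/2` in `Ω`. -/
theorem stmt_11 {N : ℕ} (hN : 1 ≤ N) (Ω : Set (EuclideanSpace ℝ (Fin N)))
    (hΩo : IsOpen Ω) (hΩconn : IsConnected Ω) (hΩbd : Bornology.IsBounded Ω)
    (q d : ℝ) (hq0 : 0 < q) (hq1 : q < 1) (hd : 0 < d)
    (l : ℝ) (φ₁ : EuclideanSpace ℝ (Fin N) → ℝ) (heig : IsFirstEigenpair Ω l φ₁)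
    (ξ : EuclideanSpace ℝ (Fin N) → ℝ) (hξ : IsTorsionFn Ω ξ) :
    ∃ μ₀ : ℝ, 0 < μ₀ ∧ ∀ μ : ℝ, 0 < μ → μ < μ₀ →
      ∃ u : EuclideanSpace ℝ (Fin N) → ℝ,
        ContinuousOn u (closure Ω) ∧ ContDiffOn ℝ 2 u Ω ∧
        (∀ x ∈ Ω, (-(1 + d * (gradNorm2 Ω u) ^ 2)) * lapl u x
          = μ * u x ^ q + π * Real.sin (u x) ^ 3) ∧
        (∀ x ∈ Ω, 0 < u x ∧ u x ≤ π / 2) ∧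
        (∀ x ∈ frontier Ω, u x = 0) := by
  exact stmt_11_general hN hΩo hΩbd hq0 hq1 hd.le heig hξ
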